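/- arXiv:2210.13045 — 4 statements merged into one kernel-verified Lean document; each statement's English description precedes it below -/
import Mathlib

section
/- Let Δ be a negative integer with Δ ≡ 0 or 1 (mod 4), let π ∈ {0,1} satisfy π ≡ Δ (mod 2), set μ := (Δ − π²)/4 ∈ ℤ, and let S_ω := ℤ[ω]/⟨ω² + πω − μ⟩ (an integral domain since Δ < 0). Let a, b, c ∈ ℤ with b² − 4ac = Δ, a ≠ 0, gcd(a, Δ) = 1 and b ≡ π (mod 2). If there exist x, y ∈ ℤ and a sign σ ∈ {1, −1} such that a ≡ σ·(x² + πxy − μy²) (mod Δ), then the class of the ideal ⟨a, ω + (π−b)/2⟩ in the class group of S_ω is a square. (This expresses that over ℤ with negative discriminant, the principal genus for the twisted action is exactly the subgroup of squares.) -/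
open Polynomial FractionalIdeal

open scoped nonZeroDivisors

/-!
Replacing `a` by `-a` if necessary, the form `f = [a, b, c]` is positive definite, and multiplying
by `a` shows that `f(P) ≡ ±1 (mod Δ)` for some `P`. On the lattice of the points `zP + √Δ·v`, with
`√Δ` acting by integral linear substitutions, `f ≡ ±z² (mod Δ)`, and `f + z²` is a positive definite
ternary form of determinant `|Δ|³/4`. By Minkowski it takes a value in `(0, |Δ|)`. This excludes the
sign `-1`, and for the sign `1` it gives `f = z²`, i.e. a nontrivial zero of the integral ternary
form `(f - z²)/Δ`. Intersecting this conic with lines through that zero gives a zero whose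
`z`-coordinate is prime to `Δ`, so `f` properly represents some `z²` with `z` prime to `Δ`.
Then `⟨a, θ⟩` is equivalent to an ideal `⟨z², τ⟩ = ⟨z, τ⟩²`, and `⟨z, τ⟩` is invertible because its
product with its conjugate is `⟨z⟩`.
-/

section GeometryOfNumbers

open MeasureTheory Matrix

open scoped MatrixOrder Matrix.Norms.L2Operator

variable {ι : Type*} [Fintype ι]

lemma volume_fundamentalDomain_basisFun :
    volume (ZSpan.fundamentalDomain (Pi.basisFun ℝ ι)) = 1 := by
  classical
  have : Matrix.of (Pi.basisFun ℝ ι) = 1 := by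
    ext i j
    simp [Matrix.one_apply, Pi.single_apply, eq_comm]
  simp [ZSpan.volume_fundamentalDomain, this]

lemma exists_int_mem_of_convex_of_two_pow_lt_volume {s : Set (ι → ℝ)}
    (hsymm : ∀ x ∈ s, -x ∈ s) (hconv : Convex ℝ s) (hvol : 2 ^ Fintype.card ι < volume s) :
    ∃ x : ι → ℤ, x ≠ 0 ∧ (fun i ↦ (x i : ℝ)) ∈ s := by
  have : Countable (Submodule.span ℤ (Set.range (Pi.basisFun ℝ ι))).toAddSubgroup :=
    inferInstanceAs (Countable (Submodule.span ℤ (Set.range (Pi.basisFun ℝ ι))))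
  obtain ⟨⟨v, hv⟩, hv0, hvs⟩ := exists_ne_zero_mem_lattice_of_measure_mul_two_pow_lt_measure
    (ZSpan.isAddFundamentalDomain' (Pi.basisFun ℝ ι) volume) hsymm hconv
    (by rwa [volume_fundamentalDomain_basisFun, one_mul, Module.finrank_fintype_fun_eq_card])
  obtain ⟨x, rfl⟩ : ∃ x : ι → ℤ, (fun i ↦ (x i : ℝ)) = v := by
    have hint := ((Pi.basisFun ℝ ι).mem_span_iff_repr_mem ℤ v).1 hv
    simp only [Pi.basisFun_repr, Set.mem_range, algebraMap_int_eq, eq_intCast] at hint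
    choose x hx using hint
    exact ⟨x, funext hx⟩
  refine ⟨x, ?_, hvs⟩
  rintro rfl
  exact hv0 (Subtype.ext (by ext; simp))

lemma exists_int_dotProduct_mulVec_lt [DecidableEq ι] {Q : Matrix ι ι ℝ} (hQ : Q.PosDef) {r : ℝ}
    (hvol : ENNReal.ofReal √Q.det * 2 ^ Fintype.card ι <
      volume (Metric.ball (0 : EuclideanSpace ℝ ι) r)) :
    ∃ x : ι → ℤ, x ≠ 0 ∧ (fun i ↦ (x i : ℝ)) ⬝ᵥ Q *ᵥ (fun i ↦ (x i : ℝ)) < r ^ 2 := by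
  obtain ⟨B, rfl⟩ := CStarAlgebra.nonneg_iff_eq_star_mul_self.mp hQ.posSemidef.nonneg
  have hnorm (x : ι → ℝ) : x ⬝ᵥ (star B * B) *ᵥ x = ‖WithLp.toLp 2 (B *ᵥ x)‖ ^ 2 := by
    rw [← mulVec_mulVec, star_eq_conjTranspose, dotProduct_mulVec, vecMul_conjTranspose,
      EuclideanSpace.real_norm_sq_eq]
    simp [dotProduct, sq]
  have hdet : √(star B * B).det = |B.det| := by
    simp [star_eq_conjTranspose, Real.sqrt_mul_self_eq_abs]
  have hB : LinearMap.det (toLin' B) ≠ 0 := by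
    rintro h
    rw [LinearMap.det_toLin'] at h
    simpa [h] using hQ.det_pos
  set ball := WithLp.toLp 2 ⁻¹' Metric.ball (0 : EuclideanSpace ℝ ι) r with hball
  have hball_vol : volume ball = volume (Metric.ball (0 : EuclideanSpace ℝ ι) r) :=
    (PiLp.volume_preserving_toLp ι).measure_preimage
      Metric.isOpen_ball.measurableSet.nullMeasurableSet
  have hmem (x : ι → ℝ) : x ∈ toLin' B ⁻¹' ball ↔ ‖WithLp.toLp 2 (B *ᵥ x)‖ < r := by
    simp [hball]
  obtain ⟨x, hx0, hx⟩ := exists_int_mem_of_convex_of_two_pow_lt_volume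
    (s := toLin' B ⁻¹' ball)
    (fun x hx ↦ by
      rw [hmem] at hx ⊢
      rwa [mulVec_neg, WithLp.toLp_neg, norm_neg])
    (((convex_ball _ r).linear_preimage
      (WithLp.linearEquiv 2 ℝ (ι → ℝ)).symm.toLinearMap).linear_preimage _)
    (by
      rw [Measure.addHaar_preimage_linearMap _ hB, hball_vol, LinearMap.det_toLin', abs_inv,
        ENNReal.ofReal_inv_of_pos (abs_pos.2 (by simpa using hB)), mul_comm, ← div_eq_mul_inv,
        ENNReal.lt_div_iff_mul_lt (by simp_all) (by simp), mul_comm, ← hdet]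
      exact hvol)
  exact ⟨x, hx0, by
    rw [hnorm]
    exact pow_lt_pow_left₀ ((hmem _).1 hx) (norm_nonneg _) two_ne_zero⟩

lemma exists_int_dotProduct_mulVec_lt_of_four_mul_det_le {Q : Matrix (Fin 3) (Fin 3) ℝ}
    (hQ : Q.PosDef) {R : ℝ} (hR : 4 * Q.det ≤ R ^ 3) :
    ∃ x : Fin 3 → ℤ, x ≠ 0 ∧ (fun i ↦ (x i : ℝ)) ⬝ᵥ Q *ᵥ (fun i ↦ (x i : ℝ)) < R := by
  have hdet : 0 < Q.det := hQ.det_pos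
  have hR0 : 0 < R := (Odd.pow_pos_iff (n := 3) (by decide)).1 (by linarith)
  have hsqrt : 2 * √Q.det ≤ √R ^ 3 := by
    refine (pow_le_pow_iff_left₀ (by positivity) (by positivity) two_ne_zero).1 ?_
    rw [mul_pow, Real.sq_sqrt hdet.le, pow_right_comm, Real.sq_sqrt hR0.le]
    linarith
  have hball : 8 * √Q.det < √R ^ 3 * (Real.pi * 4 / 3) := by
    nlinarith [Real.pi_gt_three, pow_pos (Real.sqrt_pos.2 hR0) 3]
  obtain ⟨x, hx0, hx⟩ := exists_int_dotProduct_mulVec_lt hQ (r := √R) (by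
    rw [EuclideanSpace.volume_ball_fin_three, Fintype.card_fin, ← ENNReal.ofReal_ofNat 2,
      ← ENNReal.ofReal_pow (Real.sqrt_nonneg R), ← ENNReal.ofReal_pow zero_le_two,
      ← ENNReal.ofReal_mul (by positivity), ← ENNReal.ofReal_mul (by positivity),
      ENNReal.ofReal_lt_ofReal_iff (by positivity)]
    linarith)
  exact ⟨x, hx0, by rwa [Real.sq_sqrt hR0.le] at hx⟩

end GeometryOfNumbers

/-- The value `ax² + bxy + cy²` of the binary quadratic form `[a, b, c]` at `(x, y)`. -/
def binaryForm {R : Type*} [CommRing R] (a b c x y : R) : R :=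
  a * x ^ 2 + b * x * y + c * y ^ 2

section BinaryForm

variable {R : Type*} [CommRing R]

-- The map `(s, t) ↦ (bs + 2ct, -2as - bt)` is multiplication by `√Δ` on the ideal attached to
-- `[a, b, c]`.
lemma binaryForm_add_sqrt_disc_mul (a b c p q s t z : R) :
    binaryForm a b c (z * p + b * s + 2 * c * t) (z * q - 2 * a * s - b * t) =
      z ^ 2 * binaryForm a b c p q +
        (b ^ 2 - 4 * a * c) * (z * (q * s - p * t) - binaryForm a b c s t) := by
  simp only [binaryForm]
  ring

lemma mul_binaryForm_eq_binaryForm_one {a b c e π μ : R} (hb : π - b = 2 * e)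
    (hac : a * c = e ^ 2 - π * e - μ) (x y : R) :
    a * binaryForm a b c x y = binaryForm 1 π (-μ) (a * x - e * y) y := by
  simp only [binaryForm]
  linear_combination y ^ 2 * hac - (a * x * y) * hb

lemma exists_dvd_binaryForm_sub {a b c e π μ σ D x y : R} (hb : π - b = 2 * e)
    (hac : a * c = e ^ 2 - π * e - μ) (hσ : σ ^ 2 = 1) (hcop : IsCoprime a D)
    (h : D ∣ a - σ * binaryForm 1 π (-μ) x y) :
    ∃ p q, D ∣ binaryForm a b c p q - σ := by
  obtain ⟨u, v, huv⟩ := id hcop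
  obtain ⟨w, hw⟩ := h
  refine ⟨u * (x + e * y), y, hcop.symm.dvd_of_dvd_mul_left ?_⟩
  have hx : a * (u * (x + e * y)) - e * y = x - D * (v * (x + e * y)) := by
    linear_combination (x + e * y) * huv
  rw [mul_sub, mul_binaryForm_eq_binaryForm_one hb hac, hx]
  generalize v * (x + e * y) = z
  simp only [binaryForm] at hw ⊢
  exact ⟨-2 * x * z + D * z ^ 2 - π * z * y - σ * w,
    by linear_combination (-σ) * hw - (x ^ 2 + π * x * y - μ * y ^ 2) * hσ⟩

lemma binaryForm_pos [LinearOrder R] [IsStrictOrderedRing R] {a b c x y : R} (ha : 0 < a)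
    (hdisc : b ^ 2 - 4 * a * c < 0) (hxy : x ≠ 0 ∨ y ≠ 0) : 0 < binaryForm a b c x y := by
  have key : 4 * a * binaryForm a b c x y =
      (2 * a * x + b * y) ^ 2 + (4 * a * c - b ^ 2) * y ^ 2 := by
    simp only [binaryForm]
    ring
  have hδ : 0 < 4 * a * c - b ^ 2 := by linarith
  refine pos_of_mul_pos_right (a := 4 * a) ?_ (by positivity)
  rw [key]
  rcases eq_or_ne y 0 with rfl | hy
  · have hx : x ≠ 0 := by simpa using hxy
    simp only [mul_zero, add_zero, ne_eq, OfNat.ofNat_ne_zero, not_false_eq_true, zero_pow]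
    positivity
  · positivity

lemma binaryForm_nonneg [LinearOrder R] [IsStrictOrderedRing R] {a b c : R} (ha : 0 < a)
    (hdisc : b ^ 2 - 4 * a * c < 0) (x y : R) : 0 ≤ binaryForm a b c x y := by
  by_cases h : x ≠ 0 ∨ y ≠ 0
  · exact (binaryForm_pos ha hdisc h).le
  · push Not at h
    simp [binaryForm, h]

end BinaryForm

section Lattice

open Matrix

lemma dotProduct_mulVec_eq_binaryForm_add_sq (a b c : ℝ) (v : Fin 3 → ℝ) :
    v ⬝ᵥ !![a, b / 2, 0; b / 2, c, 0; 0, 0, 1] *ᵥ v =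
      binaryForm a b c (v 0) (v 1) + v 2 ^ 2 := by
  simp [dotProduct, mulVec, Fin.sum_univ_three, binaryForm]
  ring

lemma posDef_binaryForm_add_sq {a b c : ℝ} (ha : 0 < a) (hdisc : b ^ 2 - 4 * a * c < 0) :
    !![a, b / 2, 0; b / 2, c, 0; 0, 0, 1].PosDef := by
  refine .of_dotProduct_mulVec_pos (by ext i j; fin_cases i <;> fin_cases j <;> simp) fun v hv ↦ ?_
  rw [star_trivial, dotProduct_mulVec_eq_binaryForm_add_sq]
  by_cases h : v 0 ≠ 0 ∨ v 1 ≠ 0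
  · have := binaryForm_pos ha hdisc h
    positivity
  · push Not at h
    have : v 2 ≠ 0 := fun h2 ↦ hv (by ext i; fin_cases i <;> simp [h, h2])
    simp only [h, binaryForm, mul_zero, ne_eq, OfNat.ofNat_ne_zero, not_false_eq_true, zero_pow,
      add_zero, zero_add]
    positivity

lemma exists_int_binaryForm_add_sq_lt {a b c : ℤ} (ha : 0 < a) (hdisc : b ^ 2 - 4 * a * c < 0)
    (p q : ℤ) : ∃ s t z : ℤ,
      binaryForm a b c (z * p + b * s + 2 * c * t) (z * q - 2 * a * s - b * t) + z ^ 2 ∈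
        Set.Ioo 0 (4 * a * c - b ^ 2) := by
  set P : Matrix (Fin 3) (Fin 3) ℝ := !![(a : ℝ), b / 2, 0; b / 2, c, 0; 0, 0, 1] with hP
  set N : Matrix (Fin 3) (Fin 3) ℝ := !![(b : ℝ), 2 * c, p; -2 * a, -b, q; 0, 0, 1] with hN
  have hdetN : N.det = 4 * a * c - b ^ 2 := by
    simp [hN, det_fin_three]
    ring
  have hdetP : 4 * P.det = 4 * a * c - b ^ 2 := by
    simp [hP, det_fin_three]
    ring
  have hdisc' : (b : ℝ) ^ 2 - 4 * a * c < 0 := by exact_mod_cast hdisc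
  have hunit : IsUnit N := by
    rw [isUnit_iff_isUnit_det, isUnit_iff_ne_zero, hdetN]
    linarith
  have hpos : (Nᴴ * P * N).PosDef :=
    (posDef_binaryForm_add_sq (by exact_mod_cast ha) hdisc').conjTranspose_mul_mul_same
      (mulVec_injective_of_isUnit hunit)
  obtain ⟨x, hx0, hx⟩ := exists_int_dotProduct_mulVec_lt_of_four_mul_det_le hpos
    (R := 4 * a * c - b ^ 2) (by
      simp only [det_mul, det_conjTranspose, star_trivial, hdetN]
      exact (show _ = _ by linear_combination (4 * a * c - b ^ 2 : ℝ) ^ 2 * hdetP).le)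
  have hx_pos := hpos.dotProduct_mulVec_pos (x := fun i ↦ (x i : ℝ))
    fun h ↦ hx0 (funext fun i ↦ by simpa using congrFun h i)
  have hval : (fun i ↦ (x i : ℝ)) ⬝ᵥ (Nᴴ * P * N) *ᵥ (fun i ↦ (x i : ℝ)) =
      binaryForm (a : ℝ) b c (x 2 * p + b * x 0 + 2 * c * x 1)
        (x 2 * q - 2 * a * x 0 - b * x 1) + x 2 ^ 2 := by
    rw [← mulVec_mulVec, ← mulVec_mulVec, dotProduct_mulVec, vecMul_conjTranspose, star_trivial,
      star_trivial, hP, dotProduct_mulVec_eq_binaryForm_add_sq]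
    simp [hN, mulVec, dotProduct, Fin.sum_univ_three, binaryForm]
    ring
  rw [star_trivial, hval] at hx_pos
  rw [hval] at hx
  refine ⟨x 0, x 1, x 2, ?_, ?_⟩
  · simp only [binaryForm] at hx_pos ⊢
    exact_mod_cast hx_pos
  · simp only [binaryForm] at hx ⊢
    exact_mod_cast hx

end Lattice

section QuadraticForm

variable {R M : Type*} [CommRing R] [AddCommGroup M] [Module R M]

-- This is the second point in which the line through `v` and `w` meets the quadric `Q = 0`.
lemma isotropic_smul_sub_polar_smul {Q : QuadraticForm R M} {v : M} (hv : Q v = 0) (w : M) :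
    Q (Q w • v - QuadraticMap.polar Q v w • w) = 0 := by
  rw [sub_eq_add_neg, QuadraticMap.map_add Q, QuadraticMap.map_neg, QuadraticMap.map_smul,
    QuadraticMap.map_smul, hv, QuadraticMap.polar_neg_right, QuadraticMap.polar_smul_left,
    QuadraticMap.polar_smul_right]
  simp only [smul_eq_mul]
  ring

lemma exists_isCoprime_quadraticForm [IsDomain R] [IsPrincipalIdealRing R]
    (Q : QuadraticForm R M) {N : R} (hN : N ≠ 0)
    (hQ : ∀ p, Prime p → p ∣ N → ∃ v, ¬ p ∣ Q v) : ∃ v, IsCoprime (Q v) N := by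
  induction N using UniqueFactorizationMonoid.induction_on_prime with
  | h₁ => exact absurd rfl hN
  | h₂ N hunit => exact ⟨0, ⟨0, ↑hunit.unit⁻¹, by simp⟩⟩
  | h₃ N p hN0 hp ih =>
    obtain ⟨v, hv⟩ := ih hN0 fun q hq hqN ↦ hQ q hq (hqN.mul_left p)
    by_cases hpN : p ∣ N
    · exact ⟨v, (hv.of_isCoprime_of_dvd_right hpN).mul_right hv⟩
    obtain ⟨u, hu⟩ := hQ p hp (dvd_mul_right p N)
    have hcop : IsCoprime p N := hp.irreducible.coprime_iff_not_dvd.2 hpN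
    have hval : Q (p • v + N • u) =
        p ^ 2 * Q v + N ^ 2 * Q u + p * N * QuadraticMap.polar Q v u := by
      rw [QuadraticMap.map_add Q, QuadraticMap.map_smul, QuadraticMap.map_smul,
        QuadraticMap.polar_smul_left, QuadraticMap.polar_smul_right]
      simp only [smul_eq_mul]
      ring
    refine ⟨p • v + N • u, IsCoprime.mul_right ?_ ?_⟩
    · have : IsCoprime (N ^ 2 * Q u) p :=
        hcop.symm.pow_left.mul_left (hp.irreducible.coprime_iff_not_dvd.2 hu).symm
      convert this.add_mul_left_left (p * Q v + N * QuadraticMap.polar Q v u) using 1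
      rw [hval]
      ring
    · have : IsCoprime (p ^ 2 * Q v) N := hcop.pow_left.mul_left hv
      convert this.add_mul_left_left (N * Q u + p * QuadraticMap.polar Q v u) using 1
      rw [hval]
      ring

lemma exists_isotropic_isCoprime [IsDomain R] [IsPrincipalIdealRing R] {Q : QuadraticForm R M}
    {v : M} (hv : Q v = 0) (ℓ : M →ₗ[R] R) {N : R} (hN : N ≠ 0)
    (hloc : ∀ p, Prime p → p ∣ N →
      ∃ w, ¬ p ∣ Q w * ℓ v - QuadraticMap.polar Q v w * ℓ w) :
    ∃ w, Q w = 0 ∧ IsCoprime (ℓ w) N := by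
  have hval (w : M) : (ℓ v • Q - QuadraticMap.linMulLin (Q.polarBilin v) ℓ) w =
      Q w * ℓ v - QuadraticMap.polar Q v w * ℓ w := by
    simp [mul_comm]
  obtain ⟨w, hw⟩ := exists_isCoprime_quadraticForm
    (ℓ v • Q - QuadraticMap.linMulLin (Q.polarBilin v) ℓ) hN (by simpa only [hval] using hloc)
  refine ⟨_, isotropic_smul_sub_polar_smul hv w, ?_⟩
  simpa [hval] using hw

end QuadraticForm

section TernaryForm

/-- The ternary quadratic form `kz² + z(qs - pt) - (as² + bst + ct²)` in `(s, t, z)`. When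
`[a, b, c]` has discriminant `Δ` and takes the value `1 + kΔ` at `(p, q)`, it is
`1/Δ` times the form of `binaryForm_sub_sq_eq_mul_ternaryForm`. -/
def ternaryForm {R : Type*} [CommRing R] (a b c p q k : R) : QuadraticForm R (Fin 3 → R) :=
  k • QuadraticMap.proj 2 2 + q • QuadraticMap.proj 0 2 - p • QuadraticMap.proj 1 2 -
    a • QuadraticMap.proj 0 0 - b • QuadraticMap.proj 0 1 - c • QuadraticMap.proj 1 1

variable {R : Type*} [CommRing R] (a b c p q k : R)

lemma ternaryForm_apply (v : Fin 3 → R) :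
    ternaryForm a b c p q k v =
      k * v 2 ^ 2 + v 2 * (q * v 0 - p * v 1) - binaryForm a b c (v 0) (v 1) := by
  simp [ternaryForm, binaryForm, QuadraticMap.proj_apply]
  ring

variable {a b c p q k}

lemma binaryForm_sub_sq_eq_mul_ternaryForm
    (hpq : binaryForm a b c p q = 1 + (b ^ 2 - 4 * a * c) * k) (v : Fin 3 → R) :
    binaryForm a b c (v 2 * p + b * v 0 + 2 * c * v 1) (v 2 * q - 2 * a * v 0 - b * v 1) -
      v 2 ^ 2 = (b ^ 2 - 4 * a * c) * ternaryForm a b c p q k v := by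
  rw [binaryForm_add_sqrt_disc_mul, hpq, ternaryForm_apply]
  ring

lemma prime_dvd_of_dvd_binaryForm {π : R} (hπ : Prime π) {s t : R}
    (hpq : ¬ π ∣ binaryForm a b c p q) (hst : π ∣ binaryForm a b c s t)
    (hprop : π ∣ q * s - p * t) : π ∣ s ∧ π ∣ t := by
  have dvd_of_dvd_mul_sq {x : R} (h : π ∣ binaryForm a b c p q * x ^ 2) : π ∣ x :=
    hπ.dvd_of_dvd_pow ((hπ.dvd_or_dvd h).resolve_left hpq)
  constructor <;> apply dvd_of_dvd_mul_sq
  · have : binaryForm a b c p q * s ^ 2 =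
        p ^ 2 * binaryForm a b c s t + (q * s - p * t) * (b * p * s + c * (q * s + p * t)) := by
      simp only [binaryForm]
      ring
    exact this ▸ (hst.mul_left _).add (hprop.mul_right _)
  · have : binaryForm a b c p q * t ^ 2 =
        q ^ 2 * binaryForm a b c s t - (q * s - p * t) * (a * (p * t + q * s) + b * q * t) := by
      simp only [binaryForm]
      ring
    exact this ▸ (hst.mul_left _).sub (hprop.mul_right _)

lemma exists_not_dvd_ternaryForm_mul_sub_polar_mul {π : R} (hπ : Prime π) (ha : ¬ π ∣ a)
    (hpq : ¬ π ∣ binaryForm a b c p q) {v : Fin 3 → R} (hv : ternaryForm a b c p q k v = 0)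
    (hprim : ∃ i, ¬ π ∣ v i) :
    ∃ w, ¬ π ∣ ternaryForm a b c p q k w * v 2 -
      QuadraticMap.polar (ternaryForm a b c p q k) v w * w 2 := by
  by_contra! h
  have h2 : π ∣ v 2 := by
    have := h (Pi.single 0 1)
    simp only [ternaryForm_apply, binaryForm, Pi.single_apply] at this
    simpa [hπ.dvd_mul, ha] using this
  have hprop : π ∣ q * v 0 - p * v 1 := by
    have hval : ternaryForm a b c p q k (Pi.single 2 1) * v 2 -
        QuadraticMap.polar (ternaryForm a b c p q k) v (Pi.single 2 1) *
          (Pi.single 2 1 : Fin 3 → R) 2 =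
          -(q * v 0 - p * v 1) - v 2 * k := by
      simp [QuadraticMap.polar, ternaryForm_apply, binaryForm]
      ring
    have := h (Pi.single 2 1)
    rwa [hval, dvd_sub_left (h2.mul_right k), dvd_neg] at this
  have hf : π ∣ binaryForm a b c (v 0) (v 1) := by
    rw [ternaryForm_apply] at hv
    rw [← sub_eq_zero.1 hv]
    exact ((h2.pow two_ne_zero).mul_left k).add (h2.mul_right _)
  obtain ⟨i, hi⟩ := hprim
  have := prime_dvd_of_dvd_binaryForm hπ hpq hf hprop
  fin_cases i <;> simp_all

lemma exists_eq_smul_primitive [IsDomain R] [NormalizedGCDMonoid R] {ι : Type*} [Finite ι]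
    {v : ι → R} (hv : v ≠ 0) :
    ∃ d : R, d ≠ 0 ∧ ∃ u : ι → R, v = d • u ∧ ∀ π, Prime π → ∃ i, ¬ π ∣ u i := by
  have := Fintype.ofFinite ι
  obtain ⟨i, hi⟩ := Function.ne_iff.1 hv
  obtain ⟨u, hvu, hu⟩ := Finset.univ.extract_gcd v ⟨i, Finset.mem_univ i⟩
  refine ⟨Finset.univ.gcd v, fun h ↦ hi (Finset.gcd_eq_zero_iff.1 h i (Finset.mem_univ i)), u,
    funext fun j ↦ hvu j (Finset.mem_univ j), fun π hπ ↦ ?_⟩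
  by_contra! h
  exact hπ.not_dvd_one (hu ▸ Finset.dvd_gcd fun j _ ↦ h j)

lemma exists_ternaryForm_eq_zero_isCoprime [IsDomain R] [IsPrincipalIdealRing R]
    [NormalizedGCDMonoid R] {N : R} (hN : N ≠ 0)
    (ha : IsCoprime a N) (hpq : IsCoprime (binaryForm a b c p q) N) {v : Fin 3 → R} (hv0 : v ≠ 0)
    (hv : ternaryForm a b c p q k v = 0) :
    ∃ w, ternaryForm a b c p q k w = 0 ∧ IsCoprime (w 2) N := by
  obtain ⟨d, hd, u, rfl, hu⟩ := exists_eq_smul_primitive hv0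
  rw [QuadraticMap.map_smul, smul_eq_zero_iff_right (mul_ne_zero hd hd)] at hv
  have not_dvd {π x : R} (hπ : Prime π) (hπN : π ∣ N) (hx : IsCoprime x N) : ¬ π ∣ x :=
    fun h ↦ hπ.not_isUnit (hx.isUnit_of_dvd' h hπN)
  exact exists_isotropic_isCoprime hv (LinearMap.proj 2) hN fun π hπ hπN ↦
    exists_not_dvd_ternaryForm_mul_sub_polar_mul hπ (not_dvd hπ hπN ha) (not_dvd hπ hπN hpq) hv
      (hu π hπ)

end TernaryForm

section Squares

variable {a b c : ℤ}

lemma not_dvd_binaryForm_add_one (ha : 0 < a) (hdisc : b ^ 2 - 4 * a * c < 0) (p q : ℤ) :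
    ¬ b ^ 2 - 4 * a * c ∣ binaryForm a b c p q + 1 := by
  rintro ⟨k, hk⟩
  obtain ⟨s, t, z, hpos, hlt⟩ := exists_int_binaryForm_add_sq_lt ha hdisc p q
  refine (Int.le_of_dvd hpos ?_).not_gt hlt
  rw [← neg_sub, neg_dvd]
  exact ⟨z ^ 2 * k + (z * (q * s - p * t) - binaryForm a b c s t), by
    linear_combination binaryForm_add_sqrt_disc_mul a b c p q s t z + z ^ 2 * hk⟩

lemma exists_ternaryForm_eq_zero (ha : 0 < a) (hdisc : b ^ 2 - 4 * a * c < 0) {p q k : ℤ}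
    (hpq : binaryForm a b c p q = 1 + (b ^ 2 - 4 * a * c) * k) :
    ∃ v ≠ 0, ternaryForm a b c p q k v = 0 := by
  obtain ⟨s, t, z, hpos, hlt⟩ := exists_int_binaryForm_add_sq_lt ha hdisc p q
  refine ⟨![s, t, z], ?_, ?_⟩
  · intro h
    obtain ⟨rfl, rfl, rfl⟩ : s = 0 ∧ t = 0 ∧ z = 0 := by simpa using h
    simp [binaryForm] at hpos
  have hval := binaryForm_sub_sq_eq_mul_ternaryForm hpq ![s, t, z]
  simp only [Matrix.cons_val] at hval
  have hnonneg := binaryForm_nonneg ha hdisc (z * p + b * s + 2 * c * t) (z * q - 2 * a * s - b * t)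
  have hzero := Int.eq_zero_of_abs_lt_dvd (Dvd.intro _ hval.symm).neg_left
    ((abs_sub_lt_iff.2 ⟨by linarith [sq_nonneg z], by linarith⟩).trans_eq (neg_sub _ _).symm)
  exact (mul_eq_zero.1 (hval.symm.trans hzero)).resolve_left hdisc.ne

lemma exists_isCoprime_binaryForm_eq_sq {X Y Z : ℤ} (hZ : Z ≠ 0)
    (h : binaryForm a b c X Y = Z ^ 2) :
    ∃ x y z, IsCoprime x y ∧ z ∣ Z ∧ binaryForm a b c x y = z ^ 2 := by
  have hgcd : 0 < Int.gcd X Y := by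
    rw [Int.gcd_pos_iff]
    by_contra! h0
    exact hZ (sq_eq_zero_iff.1 (by simp [← h, binaryForm, h0]))
  obtain ⟨g, x, y, hg, hxy, rfl, rfl⟩ := Int.exists_gcd_one' hgcd
  have hmul : (g : ℤ) ^ 2 * binaryForm a b c x y = Z ^ 2 := by
    rw [← h]
    simp only [binaryForm]
    ring
  obtain ⟨z, rfl⟩ : (g : ℤ) ∣ Z := (Int.pow_dvd_pow_iff two_ne_zero).1 (Dvd.intro _ hmul)
  refine ⟨x, y, z, Int.isCoprime_iff_gcd_eq_one.2 hxy, dvd_mul_left z g, ?_⟩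
  rw [mul_pow] at hmul
  exact mul_left_cancel₀ (by positivity) hmul

lemma not_isUnit_of_sq_sub_four_mul_mul_neg (hdisc : b ^ 2 - 4 * a * c < 0) :
    ¬ IsUnit (b ^ 2 - 4 * a * c) := by
  rw [Int.isUnit_iff]
  rcases Int.even_or_odd' b with ⟨n, rfl | rfl⟩ <;> grind

lemma exists_binaryForm_eq_sq (ha : 0 < a) (hdisc : b ^ 2 - 4 * a * c < 0)
    (hcop : IsCoprime a (b ^ 2 - 4 * a * c)) {p q : ℤ}
    (h : b ^ 2 - 4 * a * c ∣ binaryForm a b c p q - 1) :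
    ∃ x y z, z ≠ 0 ∧ IsCoprime x y ∧ IsCoprime z (b ^ 2 - 4 * a * c) ∧
      binaryForm a b c x y = z ^ 2 := by
  obtain ⟨k, hk⟩ := h
  have hpq : binaryForm a b c p q = 1 + (b ^ 2 - 4 * a * c) * k := by linarith
  obtain ⟨v, hv0, hv⟩ := exists_ternaryForm_eq_zero ha hdisc hpq
  obtain ⟨w, hw, hwcop⟩ := exists_ternaryForm_eq_zero_isCoprime hdisc.ne hcop
    ⟨1, -k, by linear_combination hpq⟩ hv0 hv
  have hw0 : w 2 ≠ 0 := fun h0 ↦ not_isUnit_of_sq_sub_four_mul_mul_neg hdisc <|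
    isCoprime_zero_left.1 (h0 ▸ hwcop)
  have hsq := binaryForm_sub_sq_eq_mul_ternaryForm hpq w
  rw [hw, mul_zero, sub_eq_zero] at hsq
  obtain ⟨x, y, z, hxy, hz, hval⟩ := exists_isCoprime_binaryForm_eq_sq hw0 hsq
  exact ⟨x, y, z, ne_zero_of_dvd_ne_zero hw0 hz, hxy, hwcop.of_isCoprime_of_dvd_left hz, hval⟩

end Squares

section Ideals

variable {S : Type*} [CommRing S]

lemma span_singleton_mul_span_pair (x y z : S) :
    Ideal.span {x} * Ideal.span {y, z} = Ideal.span {x * y, x * z} := by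
  rw [Ideal.span_mul_span', Set.singleton_mul, Set.image_pair]

lemma span_binaryForm_mul_span_pair {θ a b c x y s t : S} (hθ : θ ^ 2 + b * θ + a * c = 0)
    (hst : s * x + t * y = 1) :
    Ideal.span {binaryForm a b c x y} * Ideal.span {a, θ} =
      Ideal.span {a * x - y * θ} *
        Ideal.span {binaryForm a b c x y, θ + (a * x * t + b * y * t - c * y * s)} := by
  have hmul : (a * x - y * θ) * (θ + (a * x * t + b * y * t - c * y * s)) =
      binaryForm a b c x y * (a * t + s * θ) := by
    simp only [binaryForm]
    linear_combination (-y) * hθ - (a * x * θ + c * a * y + b * y * θ) * hst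
  rw [span_singleton_mul_span_pair, span_singleton_mul_span_pair, hmul]
  refine le_antisymm (Ideal.span_le.2 (Set.pair_subset_iff.2 ⟨?_, ?_⟩))
    (Ideal.span_le.2 (Set.pair_subset_iff.2 ⟨?_, ?_⟩)) <;> refine Ideal.mem_span_pair.2 ?_
  · exact ⟨s, y, by linear_combination (binaryForm a b c x y * a) * hst⟩
  · exact ⟨-t, x, by linear_combination (binaryForm a b c x y * θ) * hst⟩
  · exact ⟨x, -y, by ring⟩
  · exact ⟨t, s, by ring⟩

lemma span_pair_sq {τ r z m : S} (hτ : τ ^ 2 = r * τ - z ^ 2 * m) (hrz : IsCoprime r z) :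
    Ideal.span {z, τ} ^ 2 = Ideal.span {z ^ 2, τ} := by
  obtain ⟨u, v, huv⟩ := hrz
  rw [sq, Ideal.span_pair_mul_span_pair]
  refine le_antisymm (Ideal.span_le.2 ?_) (Ideal.span_le.2 (Set.pair_subset_iff.2 ⟨?_, ?_⟩))
  · rintro x (rfl | rfl | rfl | rfl) <;> refine Ideal.mem_span_pair.2 ?_
    · exact ⟨1, 0, by ring⟩
    · exact ⟨0, z, by ring⟩
    · exact ⟨0, z, by ring⟩
    · exact ⟨-m, r, by linear_combination -hτ⟩
  · exact Ideal.subset_span (by simp [sq])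
  · suffices u * m * (z * z) + v * (z * τ) + u * (τ * τ) ∈
        Ideal.span {z * z, z * τ, τ * z, τ * τ} by
      rwa [show u * m * (z * z) + v * (z * τ) + u * (τ * τ) = τ by
        linear_combination τ * huv + u * hτ] at this
    refine add_mem (add_mem ?_ ?_) ?_ <;>
      exact Ideal.mul_mem_left _ _ (Ideal.subset_span (by simp))

lemma span_pair_mul_span_pair_conj {τ r z m : S} (hτ : τ ^ 2 = r * τ - z ^ 2 * m)
    (hrz : IsCoprime r z) : Ideal.span {z, τ} * Ideal.span {z, r - τ} = Ideal.span {z} := by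
  obtain ⟨u, v, huv⟩ := hrz
  rw [Ideal.span_pair_mul_span_pair]
  refine le_antisymm (Ideal.span_le.2 ?_) (Ideal.span_le.2 (Set.singleton_subset_iff.2 ?_))
  · rintro x (rfl | rfl | rfl | rfl) <;> refine Ideal.mem_span_singleton.2 ?_
    · exact ⟨z, rfl⟩
    · exact ⟨_, rfl⟩
    · exact ⟨τ, mul_comm _ _⟩
    · exact ⟨z * m, by linear_combination -hτ⟩
  · suffices v * (z * z) + u * (z * (r - τ)) + u * (τ * z) ∈
        Ideal.span {z * z, z * (r - τ), τ * z, τ * (r - τ)} by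
      rwa [show v * (z * z) + u * (z * (r - τ)) + u * (τ * z) = z by
        linear_combination z * huv] at this
    refine add_mem (add_mem ?_ ?_) ?_ <;>
      exact Ideal.mul_mem_left _ _ (Ideal.subset_span (by simp))

variable {K : Type*} [CommRing K] [Algebra S K] [IsFractionRing S K]

lemma isUnit_coeIdeal_of_mul_eq_span_singleton {J J' : Ideal S} {n : S} (hn : n ∈ S⁰)
    (h : J * J' = Ideal.span {n}) : IsUnit (J : FractionalIdeal S⁰ K) := by
  obtain ⟨w, hw⟩ := (IsLocalization.map_units K ⟨n, hn⟩).exists_right_inv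
  refine IsUnit.of_mul_eq_one ((J' : FractionalIdeal S⁰ K) * spanSingleton S⁰ w) ?_
  rw [← mul_assoc, ← coeIdeal_mul, h, coeIdeal_span_singleton, spanSingleton_mul_spanSingleton, hw,
    spanSingleton_one]

lemma exists_coeIdeal_eq_spanSingleton_mul {I J : Ideal S} {n α : S} (hn : n ∈ S⁰) (hα : α ∈ S⁰)
    (h : Ideal.span {n} * I = Ideal.span {α} * J) :
    ∃ g : K, IsUnit g ∧ (I : FractionalIdeal S⁰ K) = spanSingleton S⁰ g * J := by
  obtain ⟨w, hw⟩ := (IsLocalization.map_units K ⟨n, hn⟩).exists_left_inv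
  refine ⟨w * algebraMap S K α,
    (IsUnit.of_mul_eq_one _ hw).mul (IsLocalization.map_units K ⟨α, hα⟩), ?_⟩
  rw [← spanSingleton_mul_spanSingleton, mul_assoc, ← coeIdeal_span_singleton, ← coeIdeal_mul,
    ← h, coeIdeal_mul, coeIdeal_span_singleton, ← mul_assoc, spanSingleton_mul_spanSingleton, hw,
    spanSingleton_one, one_mul]

/-- The class of the ideal `I` modulo principal fractional ideals is the square of the class of an
invertible fractional ideal. When `S` is not a domain, the generator `g` has to be a unit of the
total ring of fractions. -/
def HasSquareClass (I : Ideal S) : Prop :=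
  ∃ J : FractionalIdeal S⁰ (FractionRing S), IsUnit J ∧
    ∃ g : FractionRing S, IsUnit g ∧
      (I : FractionalIdeal S⁰ (FractionRing S)) = spanSingleton S⁰ g * J ^ 2

lemma hasSquareClass_span_pair {θ a b c x y z : S} (hθ : θ ^ 2 + b * θ + a * c = 0)
    (hxy : IsCoprime x y) (haz : a * z ∈ S⁰) (hcop : IsCoprime z (b ^ 2 - 4 * a * c))
    (hval : binaryForm a b c x y = z ^ 2) :
    HasSquareClass (Ideal.span {a, θ}) := by
  obtain ⟨s, t, hst⟩ := hxy
  set h := a * x * t + b * y * t - c * y * s with hh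
  set m := a * t ^ 2 - b * t * s + c * s ^ 2 with hm
  have hnorm : h ^ 2 - b * h + a * c = z ^ 2 * m := by
    rw [← hval, hh, hm]
    simp only [binaryForm]
    linear_combination
      (b * (a * x * t + b * y * t - c * y * s) - a * c * (s * x + t * y + 1)) * hst
  have hτ : (θ + h) ^ 2 = (2 * h - b) * (θ + h) - z ^ 2 * m := by
    linear_combination hθ - hnorm
  have hcop' : IsCoprime (2 * h - b) z := by
    rw [show b ^ 2 - 4 * a * c = (2 * h - b) * (2 * h - b) + z * (-4 * z * m) by
      linear_combination -4 * hnorm] at hcop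
    exact (IsCoprime.of_add_mul_left_right hcop).symm.of_mul_left_left
  have hz : z ∈ S⁰ := (mul_mem_nonZeroDivisors.1 haz).2
  have hnormα : (a * x - y * θ) * (a * x + b * y + y * θ) = a * z * z := by
    simp only [binaryForm] at hval
    linear_combination a * hval - y ^ 2 * hθ
  have hα : a * x - y * θ ∈ S⁰ :=
    (mul_mem_nonZeroDivisors.1 (hnormα ▸ mul_mem haz hz)).1
  have hmul := span_binaryForm_mul_span_pair hθ hst
  rw [hval, ← hh, ← span_pair_sq hτ hcop'] at hmul
  obtain ⟨g, hg, heq⟩ := exists_coeIdeal_eq_spanSingleton_mul (K := FractionRing S)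
    (pow_mem hz 2) hα hmul
  rw [coeIdeal_pow] at heq
  exact ⟨_, isUnit_coeIdeal_of_mul_eq_span_singleton hz (span_pair_mul_span_pair_conj hτ hcop'), g,
    hg, heq⟩

end Ideals

section PrincipalGenus

variable {S : Type*} [CommRing S]

lemma intCast_mem_nonZeroDivisors [Module.IsTorsionFree ℤ S] {n : ℤ} (hn : n ≠ 0) :
    (n : S) ∈ S⁰ := by
  rw [mem_nonZeroDivisors_iff_right]
  intro x hx
  rw [mul_comm, ← zsmul_eq_mul] at hx
  exact (smul_eq_zero.1 hx).resolve_left hn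

lemma hasSquareClass_span_intCast_of_pos [Module.IsTorsionFree ℤ S] {θ : S}
    {a b c p q : ℤ} (hθ : θ ^ 2 + b * θ + a * c = 0) (ha : 0 < a) (hdisc : b ^ 2 - 4 * a * c < 0)
    (hcop : IsCoprime a (b ^ 2 - 4 * a * c)) {σ : ℤ} (hσ : σ = 1 ∨ σ = -1)
    (hval : b ^ 2 - 4 * a * c ∣ binaryForm a b c p q - σ) :
    HasSquareClass (Ideal.span {(a : S), θ}) := by
  obtain rfl : σ = 1 := hσ.resolve_right fun h ↦
    not_dvd_binaryForm_add_one ha hdisc p q (by simpa [h] using hval)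
  obtain ⟨x, y, z, hz0, hxy, hz, hsq⟩ := exists_binaryForm_eq_sq ha hdisc hcop hval
  refine hasSquareClass_span_pair (b := b) (c := c) (x := x) (y := y) (z := z) hθ hxy.intCast
    ?_ ?_ ?_
  · exact_mod_cast intCast_mem_nonZeroDivisors (S := S) (mul_ne_zero ha.ne' hz0)
  · exact_mod_cast hz.intCast (R := S)
  · simp only [binaryForm] at hsq ⊢
    exact_mod_cast congrArg (Int.cast : ℤ → S) hsq

lemma hasSquareClass_span_intCast [Module.IsTorsionFree ℤ S] {θ : S}
    {a b c p q : ℤ} (hθ : θ ^ 2 + b * θ + a * c = 0) (hdisc : b ^ 2 - 4 * a * c < 0)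
    (hcop : IsCoprime a (b ^ 2 - 4 * a * c)) {σ : ℤ} (hσ : σ = 1 ∨ σ = -1)
    (hval : b ^ 2 - 4 * a * c ∣ binaryForm a b c p q - σ) :
    HasSquareClass (Ideal.span {(a : S), θ}) := by
  have ha0 : a ≠ 0 := by
    rintro rfl
    exact not_isUnit_of_sq_sub_four_mul_mul_neg hdisc (isCoprime_zero_left.1 hcop)
  rcases ha0.lt_or_gt with ha | ha
  · have hneg : b ^ 2 - 4 * a * c = b ^ 2 - 4 * -a * -c := by ring
    have hval_neg : binaryForm (-a) b (-c) p (-q) - -σ = -(binaryForm a b c p q - σ) := by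
      simp only [binaryForm]
      ring
    rw [hneg] at hdisc hcop hval
    rw [← Ideal.span_insert_neg, ← Int.cast_neg]
    refine hasSquareClass_span_intCast_of_pos ?_ (neg_pos.2 ha) hdisc hcop.neg_left
      (hσ.symm.imp neg_eq_iff_eq_neg.2 (congrArg _)) (hval_neg ▸ hval.neg_right)
    push_cast
    linear_combination hθ
  · exact hasSquareClass_span_intCast_of_pos hθ ha hdisc hcop hσ hval

theorem principal_genus_eq_squares_int_neg_disc_general [Module.IsTorsionFree ℤ S]
    {ω : S} {Δ π μ : ℤ} (hω : ω ^ 2 + π * ω - μ = 0) (hneg : Δ < 0) (hΔ : Δ = π ^ 2 + 4 * μ)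
    {a b c e : ℤ} (hdisc : b ^ 2 - 4 * a * c = Δ) (hgcd : IsCoprime a Δ)
    (he : π - b = 2 * e)
    (hval : ∃ x y : ℤ, ∃ σ : ℤ, (σ = 1 ∨ σ = -1) ∧
      (Δ ∣ a - σ * (x ^ 2 + π * x * y - μ * y ^ 2))) :
    HasSquareClass (Ideal.span {(a : S), ω + e}) := by
  obtain ⟨x, y, σ, hσ, hdvd⟩ := hval
  have hb : b = π - 2 * e := by linarith
  have hac : a * c = e ^ 2 - π * e - μ := by
    subst hb
    linarith
  have hθ : (ω + e) ^ 2 + b * (ω + e) + a * c = 0 := by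
    have hac' : (a * c : S) = e ^ 2 - π * e - μ := by exact_mod_cast congrArg (Int.cast : ℤ → S) hac
    rw [hb]
    push_cast
    linear_combination hω + hac'
  have hσ2 : σ ^ 2 = 1 := by rcases hσ with rfl | rfl <;> norm_num
  obtain ⟨p, q, hpq⟩ := exists_dvd_binaryForm_sub he hac hσ2 hgcd (x := x) (y := y) (by
    simpa [binaryForm, sub_eq_add_neg] using hdvd)
  subst hdisc
  exact hasSquareClass_span_intCast hθ hneg hgcd hσ hpq

end PrincipalGenus

/-- **Over `ℤ` with negative discriminant, the principal genus is the subgroup of squares.**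
Let `Δ < 0`, `π ∈ {0,1}` with `π ≡ Δ (mod 2)`, `μ = (Δ − π²)/4` (i.e. `Δ = π² + 4μ`),
and `S_ω := ℤ[ω]/⟨ω² + πω − μ⟩`. Let `a,b,c ∈ ℤ` with `b² − 4ac = Δ`, `a ≠ 0`,
`gcd(a,Δ) = 1`, `b ≡ π (mod 2)` (say `π − b = 2e`). If `a ≡ ±(x² + πxy − μy²) (mod Δ)`
for some `x,y`, then the class of the ideal `⟨a, ω + (π−b)/2⟩` in the class group of
`S_ω` is a square, i.e. `⟨a, ω + e⟩ = (g)·J²` for some invertible fractional ideal `J`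
and some nonzero `g` in the fraction field. -/
theorem principal_genus_eq_squares_int_neg_disc
    (Δ π μ : ℤ) (hneg : Δ < 0)
    (hπ : π = 0 ∨ π = 1) (hparity : Δ % 2 = π % 2)
    (hΔ : Δ = π ^ 2 + 4 * μ)
    (a b c e : ℤ)
    (hdisc : b ^ 2 - 4 * a * c = Δ)
    (ha0 : a ≠ 0)
    (hgcd : IsCoprime a Δ)
    (he : π - b = 2 * e)
    (hval : ∃ x y : ℤ, ∃ σ : ℤ, (σ = 1 ∨ σ = -1) ∧
      (Δ ∣ a - σ * (x ^ 2 + π * x * y - μ * y ^ 2))) :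
    letI Sω := ℤ[X] ⧸ Ideal.span {(X : ℤ[X]) ^ 2 + C π * X - C μ}
    letI mk : ℤ[X] →+* Sω := Ideal.Quotient.mk _
    letI I : Ideal Sω := Ideal.span {mk (C a), mk (X + C e)}
    ∃ J : FractionalIdeal Sω⁰ (FractionRing Sω), IsUnit J ∧
      ∃ g : FractionRing Sω, g ≠ 0 ∧
        (I : FractionalIdeal Sω⁰ (FractionRing Sω)) =
          spanSingleton Sω⁰ g * J ^ 2 := by
  have hmonic : ((X : ℤ[X]) ^ 2 + C π * X - C μ).Monic := by monicity!
  have := hmonic.free_quotient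
  have hdeg : ((X : ℤ[X]) ^ 2 + C π * X - C μ).degree = 2 := by compute_degree!
  have : Nontrivial (ℤ[X] ⧸ Ideal.span {(X : ℤ[X]) ^ 2 + C π * X - C μ}) :=
    AdjoinRoot.nontrivial _ (hdeg ▸ two_ne_zero)
  have hω := Ideal.Quotient.eq_zero_iff_mem.2
    (Ideal.mem_span_singleton_self ((X : ℤ[X]) ^ 2 + C π * X - C μ))
  obtain ⟨J, hJ, g, hg, hI⟩ :=
    principal_genus_eq_squares_int_neg_disc_general (by simpa using hω) hneg hΔ hdisc hgcd he hval
  exact ⟨J, hJ, g, hg.ne_zero, by simpa using hI⟩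
end

section
/- Let K be a field of characteristic 0 and let f ∈ K[X] be a monic squarefree polynomial of odd degree at least 3. Let a, b, c ∈ K[X] satisfy b² − ac = f with a coprime to f in K[X]. Then the ideal ⟨a, Y − b⟩ of A_f := K[X][Y]/⟨Y² − f⟩ is invertible, and its class in the class group Cl(A_f) is a square if and only if there exist ε ∈ Kˣ and p ∈ K[X] such that f divides a − ε·p² in K[X]. (This is the injectivity of the Genus Theory map over K[X]: the principal genus is precisely the subgroup of squares.) -/
open Polynomial FractionalIdeal

open scoped nonZeroDivisors

/-- The coordinate ring `A_f := K[X][Y]/⟨Y² − f⟩` of the affine hyperelliptic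
curve `Y² = f(X)`. -/
noncomputable def HypRing (K : Type*) [Field K] (f : K[X]) : Type _ :=
  Polynomial K[X] ⧸ Ideal.span {(X : Polynomial K[X]) ^ 2 - C f}

noncomputable instance (K : Type*) [Field K] (f : K[X]) : CommRing (HypRing K f) :=
  Ideal.Quotient.commRing _

/-- The quotient map `K[X][Y] → A_f`. -/
noncomputable def HypRing.mk (K : Type*) [Field K] (f : K[X]) :
    Polynomial K[X] →+* HypRing K f :=
  Ideal.Quotient.mk _

/-- The ideal `⟨a, Y − b⟩` of `A_f`. -/
noncomputable def HypIdeal (K : Type*) [Field K] (f a b : K[X]) :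
    Ideal (HypRing K f) :=
  Ideal.span {HypRing.mk K f (C a), HypRing.mk K f (X - C b)}

/-! Over a principal ideal domain `R` in which `2` is a unit, consider the quadratic ring `R[ω]`
with `ω² = d`, and let the norm of an ideal be its product with its conjugate. If `d = b² − ac`
is squarefree, `⟨a, ω − b⟩` has norm `⟨a⟩` and every ideal has a principal norm. Hence, if the class
of `⟨a, ω − b⟩` is a square, taking norms shows that `a` is, up to a unit and nonzero squares, of
the form `U² − dV²`; after clearing denominators it is a unit times a square modulo `d`.

Conversely, if `a ≡ εp²` modulo `f` in `K[X]`, counting dimensions yields a nonzero solution of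
`ε(aw² + 2bwv + cv²) = s²`, which can be made primitive. A unimodular change of variables then turns
the form `[a, 2b, c]` into one with leading coefficient `s²` up to a unit, whose ideal is the square
of `⟨s, ω − B⟩` by Dirichlet composition. -/

section PrincipalIdealDomain

variable {R : Type*} [CommRing R]

theorem exists_mem_forall_mem_dvd [IsPrincipalIdealRing R] (I : Ideal R) :
    ∃ g ∈ I, ∀ x ∈ I, g ∣ x :=
  ⟨_, Submodule.IsPrincipal.generator_mem I, fun _ ↦
    (Submodule.IsPrincipal.mem_iff_generator_dvd I).1⟩

theorem span_triple_eq_top_of_squarefree [IsPrincipalIdealRing R] (h2 : IsUnit (2 : R))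
    {a b c : R} (h : Squarefree (b ^ 2 - a * c)) : Ideal.span {a, 2 * b, c} = ⊤ := by
  obtain ⟨g, hg, g_dvd⟩ := exists_mem_forall_mem_dvd (Ideal.span {a, 2 * b, c})
  have ha : g ∣ a := g_dvd a (Ideal.subset_span (by simp))
  have hb : g ∣ b := h2.dvd_mul_left.1 (g_dvd (2 * b) (Ideal.subset_span (by simp)))
  have hc : g ∣ c := g_dvd c (Ideal.subset_span (by simp))
  refine Ideal.eq_top_of_isUnit_mem _ hg (h g ?_)
  rw [pow_two]
  exact dvd_sub (mul_dvd_mul hb hb) (mul_dvd_mul ha hc)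

variable [IsDomain R] [IsPrincipalIdealRing R]

theorem exists_eq_mul_isCoprime {p q : R} (h : p ≠ 0 ∨ q ≠ 0) :
    ∃ g p' q', g ≠ 0 ∧ p = g * p' ∧ q = g * q' ∧ IsCoprime p' q' := by
  classical
  let := IsBezout.toGCDDomain R
  obtain ⟨p', q', hp, hq, hcop⟩ := extract_gcd p q
  refine ⟨gcd p q, p', q', fun h0 ↦ ?_, hp, hq, (gcd_isUnit_iff p' q').1 hcop⟩
  rw [gcd_eq_zero_iff] at h0
  exact h.elim (· h0.1) (· h0.2)

theorem dvd_of_sq_dvd_squarefree_mul_sq {d g v : R} (hd : Squarefree d)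
    (h : g ^ 2 ∣ d * v ^ 2) : g ∣ v := by
  obtain rfl | hv := eq_or_ne v 0
  · exact dvd_zero g
  obtain ⟨e, g, v, he, rfl, rfl, hcop⟩ := exists_eq_mul_isCoprime (p := g) (Or.inr hv)
  rw [mul_pow, mul_pow, mul_left_comm, mul_dvd_mul_iff_left (pow_ne_zero 2 he)] at h
  have hg : g * g ∣ d := by simpa only [pow_two] using hcop.pow.dvd_of_dvd_mul_right h
  exact mul_dvd_mul_left e (hd g hg).dvd

/-- Once the common factor of `D` and `U` is removed, `D` is a unit modulo `d`. -/
theorem exists_dvd_sub_mul_sq {d a D U V ε : R} (hd : Squarefree d) (hε : IsUnit ε) (hD : D ≠ 0)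
    (h : a * D ^ 2 = ε * (U ^ 2 - d * V ^ 2)) : ∃ p, d ∣ a - ε * p ^ 2 := by
  obtain ⟨ε', hε'⟩ := hε.exists_right_inv
  obtain ⟨g, D, U, hg, rfl, rfl, hcop⟩ := exists_eq_mul_isCoprime (q := U) (Or.inl hD)
  obtain ⟨V, rfl⟩ : g ∣ V := dvd_of_sq_dvd_squarefree_mul_sq hd
    ⟨U ^ 2 - ε' * a * D ^ 2, by
      linear_combination ε' * h + (g ^ 2 * U ^ 2 - d * V ^ 2) * hε'⟩
  have h' : a * D ^ 2 = ε * (U ^ 2 - d * V ^ 2) :=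
    mul_left_cancel₀ (pow_ne_zero 2 hg) (by linear_combination h)
  obtain ⟨r, k, hrk⟩ : IsCoprime D d := by
    obtain ⟨r, t, hrt⟩ : IsCoprime D (U ^ 2) := hcop.pow_right
    exact ⟨r + t * ε' * a * D, t * V ^ 2, by
      linear_combination hrt + t * ε' * h' + t * (U ^ 2 - d * V ^ 2) * hε'⟩
  refine ⟨U * r, a * k * (1 + r * D) - ε * V ^ 2 * r ^ 2, ?_⟩
  linear_combination r ^ 2 * h' - a * (1 + r * D) * hrk

theorem exists_isCoprime_form_eq_sq {a b c w v s ε : R} (hwv : w ≠ 0 ∨ v ≠ 0)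
    (hs : ε * (a * w ^ 2 + 2 * b * w * v + c * v ^ 2) = s ^ 2) :
    ∃ w' v' s', IsCoprime w' v' ∧
      ε * (a * w' ^ 2 + 2 * b * w' * v' + c * v' ^ 2) = s' ^ 2 := by
  obtain ⟨g, w, v, hg, rfl, rfl, hcop⟩ := exists_eq_mul_isCoprime hwv
  obtain ⟨s, rfl⟩ : g ∣ s := (IsIntegrallyClosed.pow_dvd_pow_iff two_ne_zero).1
    ⟨ε * (a * w ^ 2 + 2 * b * w * v + c * v ^ 2), by rw [← hs]; ring⟩
  exact ⟨w, v, s, hcop, mul_left_cancel₀ (pow_ne_zero 2 hg) (by linear_combination hs)⟩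

end PrincipalIdealDomain

section QuadraticRing

open QuadraticAlgebra

variable {R : Type*} [CommRing R]

theorem omega_mul_omega_eq (d : R) : ω * ω = algebraMap R (QuadraticAlgebra R d 0) d := by
  rw [omega_mul_omega_eq_algebraMap, map_zero, zero_mul, add_zero]

/-- The ideal `⟨a, ω − b⟩` of `R[ω]`, `ω² = d`, attached to the binary quadratic form
`[a, 2b, c]` with `b² − ac = d`. -/
def formIdeal (d a b : R) : Ideal (QuadraticAlgebra R d 0) :=
  Ideal.span {algebraMap R _ a, ω - algebraMap R _ b}

/-- `n` generates the norm of the ideal `I` of a quadratic ring, the norm being encoded as the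
product of `I` with its conjugate. -/
def IsIdealNorm {d : R} (I : Ideal (QuadraticAlgebra R d 0)) (n : R) : Prop :=
  I * I.map (starRingEnd _) = Ideal.span {algebraMap R _ n}

section Norm

variable {d : R} {I J : Ideal (QuadraticAlgebra R d 0)} {m n : R}

theorem IsIdealNorm.mul (hI : IsIdealNorm I m) (hJ : IsIdealNorm J n) :
    IsIdealNorm (I * J) (m * n) := by
  rw [IsIdealNorm, Ideal.map_mul, mul_mul_mul_comm, hI, hJ,
    Ideal.span_singleton_mul_span_singleton, map_mul]

theorem isIdealNorm_span_singleton (z : QuadraticAlgebra R d 0) :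
    IsIdealNorm (Ideal.span {z}) (norm z) := by
  rw [IsIdealNorm, Ideal.map_span, Set.image_singleton, Ideal.span_singleton_mul_span_singleton,
    algebraMap_norm_eq_mul_star, starRingEnd_apply]

theorem IsIdealNorm.associated [IsDomain R] (hm : IsIdealNorm I m) (hn : IsIdealNorm I n) :
    Associated m n := by
  have h := hm.symm.trans hn
  exact associated_of_dvd_dvd
    (algebraMap_dvd_iff_dvd.1 (Ideal.span_singleton_le_span_singleton.1 h.ge))
    (algebraMap_dvd_iff_dvd.1 (Ideal.span_singleton_le_span_singleton.1 h.le))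

end Norm

theorem map_starRingEnd_formIdeal (d a b : R) :
    (formIdeal d a b).map (starRingEnd _) = formIdeal d a (-b) := by
  have hω : starRingEnd (QuadraticAlgebra R d 0) (ω - algebraMap R _ b) =
      -(ω - algebraMap R _ (-b)) := by
    ext <;> simp [starRingEnd_apply]
  have ha : starRingEnd (QuadraticAlgebra R d 0) (algebraMap R _ a) = algebraMap R _ a := by
    ext <;> simp [starRingEnd_apply]
  rw [formIdeal, formIdeal, Ideal.map_span, Set.image_pair, hω, ha, Ideal.span_insert,
    Ideal.span_singleton_neg, ← Ideal.span_insert]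

theorem algebraMap_mem_formIdeal (d a b : R) : algebraMap R _ a ∈ formIdeal d a b :=
  Ideal.subset_span (Set.mem_insert _ _)

theorem omega_sub_mem_formIdeal (d a b : R) : ω - algebraMap R _ b ∈ formIdeal d a b :=
  Ideal.subset_span (Set.mem_insert_of_mem _ rfl)

theorem isIdealNorm_formIdeal {a b c d : R} (hd : b ^ 2 - a * c = d)
    (hprim : Ideal.span {a, 2 * b, c} = ⊤) : IsIdealNorm (formIdeal d a b) a := by
  rw [IsIdealNorm, map_starRingEnd_formIdeal]
  have hac : (ω - algebraMap R _ b) * (ω - algebraMap R _ (-b)) =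
      -(c • algebraMap R (QuadraticAlgebra R d 0) a) := by
    have hd' := congrArg (algebraMap R (QuadraticAlgebra R d 0)) hd
    simp only [map_sub, map_mul, map_pow] at hd'
    rw [Algebra.smul_def, map_neg]
    linear_combination omega_mul_omega_eq d - hd'
  apply le_antisymm
  · rw [formIdeal, formIdeal, Ideal.span_pair_mul_span_pair, Ideal.span_le]
    rintro z (rfl | rfl | rfl | rfl) <;> rw [SetLike.mem_coe, Ideal.mem_span_singleton]
    · exact dvd_mul_right _ _
    · exact dvd_mul_right _ _
    · exact dvd_mul_left _ _
    · rw [hac, Algebra.smul_def]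
      exact (dvd_mul_left _ _).neg_right
  · have ha := algebraMap_mem_formIdeal d a b
    have ha' := algebraMap_mem_formIdeal d a (-b)
    have hω := omega_sub_mem_formIdeal d a b
    have hω' := omega_sub_mem_formIdeal d a (-b)
    rw [Ideal.span_singleton_le_iff_mem, ← Submodule.restrictScalars_mem R]
    refine Submodule.mem_of_span_top_of_smul_mem _ _ hprim _ ?_
    rintro ⟨r, rfl | rfl | rfl⟩ <;> rw [Submodule.restrictScalars_mem]
    · rw [Algebra.smul_def]
      exact Ideal.mul_mem_mul ha ha'
    · convert sub_mem (Ideal.mul_mem_mul ha hω') (Ideal.mul_mem_mul hω ha') using 1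
      simp only [Algebra.smul_def, map_mul, map_neg, map_ofNat]
      ring
    · rw [← neg_mem_iff, ← hac]
      exact Ideal.mul_mem_mul hω hω'

/-- Dirichlet's composition of united forms. -/
theorem formIdeal_mul_formIdeal {a a' b c d : R} (hd : b ^ 2 - a * a' * c = d)
    (hunited : Ideal.span {a, a', 2 * b} = ⊤) :
    formIdeal d a b * formIdeal d a' b = formIdeal d (a * a') b := by
  set η : QuadraticAlgebra R d 0 := ω - algebraMap R _ b with hη
  have hη_sq : η * η =
      -algebraMap R _ (2 * b) * η - algebraMap R _ c * algebraMap R _ (a * a') := by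
    have hd' := congrArg (algebraMap R (QuadraticAlgebra R d 0)) hd
    simp only [map_sub, map_mul, map_pow] at hd'
    simp only [hη, map_mul, map_ofNat]
    linear_combination omega_mul_omega_eq d - hd'
  apply le_antisymm
  · rw [formIdeal, formIdeal, formIdeal, Ideal.span_pair_mul_span_pair, Ideal.span_le, ← hη]
    rintro z (rfl | rfl | rfl | rfl) <;> rw [SetLike.mem_coe, Ideal.mem_span_pair]
    · exact ⟨1, 0, by rw [map_mul]; ring⟩
    · exact ⟨0, algebraMap R _ a, by ring⟩
    · exact ⟨0, algebraMap R _ a', by ring⟩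
    · exact ⟨-algebraMap R _ c, -algebraMap R _ (2 * b), by rw [hη_sq]; ring⟩
  · have ha := algebraMap_mem_formIdeal d a b
    have ha' := algebraMap_mem_formIdeal d a' b
    have hη_mem : η ∈ formIdeal d a b := omega_sub_mem_formIdeal d a b
    have hη_mem' : η ∈ formIdeal d a' b := omega_sub_mem_formIdeal d a' b
    have haa' : algebraMap R _ (a * a') ∈ formIdeal d a b * formIdeal d a' b :=
      map_mul (algebraMap R (QuadraticAlgebra R d 0)) a a' ▸ Ideal.mul_mem_mul ha ha'
    refine Ideal.span_le.2 (Set.pair_subset haa' ?_)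
    rw [SetLike.mem_coe, ← Submodule.restrictScalars_mem R]
    refine Submodule.mem_of_span_top_of_smul_mem _ _ hunited _ ?_
    rintro ⟨r, rfl | rfl | rfl⟩ <;> rw [Submodule.restrictScalars_mem, Algebra.smul_def]
    · exact Ideal.mul_mem_mul ha hη_mem'
    · exact mul_comm η _ ▸ Ideal.mul_mem_mul hη_mem ha'
    · convert neg_mem (add_mem (Ideal.mul_mem_mul hη_mem hη_mem')
        (Ideal.mul_mem_left _ (algebraMap R _ c) haa')) using 1
      rw [hη_sq]
      ring

theorem formIdeal_mul_left_of_isUnit (d b : R) {a u : R} (hu : IsUnit u) :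
    formIdeal d (u * a) b = formIdeal d a b := by
  rw [formIdeal, formIdeal, Ideal.span_insert, Ideal.span_insert, map_mul,
    Ideal.span_singleton_mul_left_unit (hu.map _)]

theorem span_pair_eq_of_det_eq_one {p q r s : R} (hdet : p * s - q * r = 1) (x y : R) :
    Ideal.span {p * x + q * y, r * x + s * y} = Ideal.span {x, y} := by
  apply le_antisymm <;> refine Ideal.span_le.2 (Set.pair_subset ?_ ?_) <;>
    rw [SetLike.mem_coe, Ideal.mem_span_pair]
  · exact ⟨p, q, rfl⟩
  · exact ⟨r, s, rfl⟩
  · exact ⟨s, -q, by linear_combination x * hdet⟩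
  · exact ⟨-r, p, by linear_combination y * hdet⟩

/-- Multiplication by the conjugate of the element `aw − v(ω − b)` of `formIdeal d a b` realizes the
change of variables with matrix `[[w, x], [v, z]]` in the form `[a, 2b, c]`. -/
theorem span_singleton_mul_formIdeal {a b c d w v x z : R} (hd : b ^ 2 - a * c = d)
    (hdet : w * z - x * v = 1) :
    Ideal.span {⟨a * w + b * v, v⟩} * formIdeal d a b = Ideal.span {algebraMap R _ a} *
      formIdeal d (a * w ^ 2 + 2 * b * w * v + c * v ^ 2)
        (a * w * x + b * (w * z + x * v) + c * v * z) := by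
  set φ := algebraMap R (QuadraticAlgebra R d 0) with hφ
  have hd' : φ b ^ 2 - φ a * φ c = φ d := by
    simpa only [map_sub, map_mul, map_pow] using congrArg φ hd
  have hdet' : φ w * φ z - -φ v * -φ x = 1 := by
    rw [neg_mul_neg, ← map_mul, ← map_mul, ← map_sub, mul_comm v, hdet, map_one]
  have hδ : (⟨a * w + b * v, v⟩ : QuadraticAlgebra R d 0) = φ a * φ w + φ b * φ v + φ v * ω := by
    rw [mk_eq_add_smul_omega, Algebra.smul_def, map_add, map_mul, map_mul]
  have hω : ω * ω = φ d := omega_mul_omega_eq d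
  rw [formIdeal, ← span_pair_eq_of_det_eq_one hdet', formIdeal, Ideal.span_mul_span',
    Ideal.span_mul_span', Set.singleton_mul, Set.singleton_mul, Set.image_pair, Set.image_pair,
    hδ]
  congr 2
  · simp only [← hφ, map_add, map_mul, map_pow, map_ofNat]
    linear_combination -φ v ^ 2 * hω + φ v ^ 2 * hd'
  · congr 1
    simp only [← hφ, map_add, map_mul]
    linear_combination φ v * φ z * (hω - hd') + φ a * ω * hdet'

theorem exists_span_mul_formIdeal_eq_span_mul_sq [IsPrincipalIdealRing R] {a b c d w v s ε : R}
    (h2 : IsUnit (2 : R)) (hsq : Squarefree d) (hd : b ^ 2 - a * c = d) (hε : IsUnit ε)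
    (hwv : IsCoprime w v) (hs : ε * (a * w ^ 2 + 2 * b * w * v + c * v ^ 2) = s ^ 2) :
    ∃ B, Ideal.span {⟨a * w + b * v, v⟩} * formIdeal d a b =
      Ideal.span {algebraMap R _ a} * formIdeal d s B ^ 2 := by
  obtain ⟨z, x, hzx⟩ := hwv
  obtain ⟨ε', hε'⟩ := hε.exists_left_inv
  have hdet : w * z - -x * v = 1 := by linear_combination hzx
  set A := a * w ^ 2 + 2 * b * w * v + c * v ^ 2
  set B := a * w * -x + b * (w * z + -x * v) + c * v * z with hB
  set C := ε' * (a * x ^ 2 - 2 * b * x * z + c * z ^ 2) with hC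
  have hdisc : B ^ 2 - s * s * C = d := by
    rw [← pow_two s, ← hs, hC, hB, ← hd]
    linear_combination (b ^ 2 - a * c) * (w * z + x * v + 1) * hzx -
      A * (a * x ^ 2 - 2 * b * x * z + c * z ^ 2) * hε'
  have hunited : Ideal.span {s, s, 2 * B} = ⊤ := by
    have h : Ideal.span {s, 2 * B, s * C} = ⊤ :=
      span_triple_eq_top_of_squarefree h2 (by rwa [← mul_assoc, hdisc])
    rw [eq_top_iff, ← h, Ideal.span_le]
    rintro _ (rfl | rfl | rfl)
    · exact Ideal.subset_span (by simp)
    · exact Ideal.subset_span (by simp)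
    · exact Ideal.mul_mem_right _ _ (Ideal.subset_span (by simp))
  refine ⟨B, ?_⟩
  rw [span_singleton_mul_formIdeal hd hdet, pow_two (formIdeal d s B),
    formIdeal_mul_formIdeal hdisc hunited, ← pow_two, ← hs, formIdeal_mul_left_of_isUnit _ _ hε]

/-- The ideal is spanned over `R` by a generator of `J ∩ R` and an element of `J` whose imaginary
part generates the ideal of imaginary parts. -/
theorem exists_eq_span_mul_formIdeal [IsPrincipalIdealRing R] {d : R}
    (J : Ideal (QuadraticAlgebra R d 0)) :
    ∃ t a b, J = Ideal.span {algebraMap R _ t} * formIdeal d a b := by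
  obtain ⟨t, ⟨y, hy, hyt⟩, ht⟩ :=
    exists_mem_forall_mem_dvd ((J.restrictScalars R).map (imₗ d 0) : Ideal R)
  obtain ⟨m, hm, dvd_of_mem⟩ := exists_mem_forall_mem_dvd (J.comap (algebraMap R _))
  have dvd_im : ∀ x ∈ J, t ∣ x.im := fun x hx ↦ ht _ ⟨x, hx, rfl⟩
  have dvd_re : ∀ x ∈ J, t ∣ x.re := fun x hx ↦ by
    simpa using dvd_im (ω * x) (J.mul_mem_left ω hx)
  replace hyt : y.im = t := hyt
  obtain ⟨b, hb⟩ := dvd_re y hy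
  obtain ⟨a, rfl⟩ : t ∣ m := by simpa using dvd_re _ hm
  refine ⟨t, a, -b, ?_⟩
  have hy_eq : algebraMap R _ t * (ω - algebraMap R _ (-b)) = y := by
    ext <;> simp [hb, hyt]
  rw [formIdeal, Ideal.span_mul_span', Set.singleton_mul, Set.image_pair, hy_eq, ← map_mul]
  apply le_antisymm
  · intro x hx
    obtain ⟨k, hk⟩ := dvd_im x hx
    have hx_sub : x - algebraMap R _ k * y = algebraMap R _ (x.re - k * y.re) := by
      ext <;> simp [hk, hyt, mul_comm]
    obtain ⟨l, hl⟩ := dvd_of_mem (x.re - k * y.re)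
      (Ideal.mem_comap.2 (hx_sub ▸ sub_mem hx (J.mul_mem_left _ hy)))
    refine Ideal.mem_span_pair.2 ⟨algebraMap R _ l, algebraMap R _ k, ?_⟩
    rw [← map_mul, mul_comm l, ← hl, ← hx_sub, sub_add_cancel]
  · exact Ideal.span_le.2 (Set.pair_subset hm hy)

theorem exists_dvd_and_formIdeal_eq [IsPrincipalIdealRing R] (d a b : R) :
    ∃ a', a' ∣ b ^ 2 - d ∧ formIdeal d a b = formIdeal d a' b := by
  obtain ⟨g, hg⟩ := (IsPrincipalIdealRing.principal (Ideal.span {a, b ^ 2 - d})).principal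
  rw [← Ideal.span] at hg
  refine ⟨g, Ideal.mem_span_singleton.1 (hg.le (Ideal.subset_span (by simp))), ?_⟩
  have hmul : algebraMap R (QuadraticAlgebra R d 0) (b ^ 2 - d) =
      (ω - algebraMap R _ b) * -(ω + algebraMap R _ b) := by
    ext <;> simp [pow_two, sub_eq_add_neg]
  calc formIdeal d a b
      = (Ideal.span {a, b ^ 2 - d}).map (algebraMap R _) ⊔ Ideal.span {ω - algebraMap R _ b} := by
        rw [formIdeal, Ideal.map_span, Set.image_pair, Ideal.span_insert, Ideal.span_insert,
          sup_assoc, sup_eq_right.2 (Ideal.span_singleton_le_span_singleton.2 ⟨_, hmul⟩)]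
    _ = formIdeal d g b := by
        rw [hg, formIdeal, Ideal.map_span, Set.image_singleton, ← Ideal.span_insert]

theorem exists_isIdealNorm [IsPrincipalIdealRing R] {d : R} (h2 : IsUnit (2 : R))
    (hsq : Squarefree d) (J : Ideal (QuadraticAlgebra R d 0)) : ∃ n, IsIdealNorm J n := by
  obtain ⟨t, a, b, rfl⟩ := exists_eq_span_mul_formIdeal J
  obtain ⟨a, ⟨c, hc⟩, h⟩ := exists_dvd_and_formIdeal_eq d a b
  have hd : b ^ 2 - a * c = d := by linear_combination hc
  rw [h]
  exact ⟨_, (isIdealNorm_span_singleton _).mul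
    (isIdealNorm_formIdeal hd (span_triple_eq_top_of_squarefree h2 (hd ▸ hsq)))⟩

theorem exists_dvd_sub_mul_sq_of_span_mul_formIdeal_eq [IsDomain R] [IsPrincipalIdealRing R]
    {a b c d : R} (h2 : IsUnit (2 : R)) (hsq : Squarefree d) (hd : b ^ 2 - a * c = d)
    {δ γ : QuadraticAlgebra R d 0} (hδ : norm δ ≠ 0) {J : Ideal (QuadraticAlgebra R d 0)}
    (h : Ideal.span {δ} * formIdeal d a b = Ideal.span {γ} * J ^ 2) :
    ∃ ε p, IsUnit ε ∧ d ∣ a - ε * p ^ 2 := by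
  obtain ⟨n, hn⟩ := exists_isIdealNorm h2 hsq J
  have hl := (isIdealNorm_span_singleton δ).mul
    (isIdealNorm_formIdeal hd (span_triple_eq_top_of_squarefree h2 (hd ▸ hsq)))
  have hr := (isIdealNorm_span_singleton γ).mul (hn.mul hn)
  rw [h, pow_two] at hl
  obtain ⟨ε, hε⟩ := hr.associated hl
  have hnorm := norm_def (algebraMap R _ n * (γ * star δ))
  rw [map_mul, map_mul, QuadraticAlgebra.norm_algebraMap, QuadraticAlgebra.norm_star, zero_mul,
    zero_mul, add_zero, mul_assoc d, ← pow_two, ← pow_two] at hnorm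
  obtain ⟨p, hp⟩ := exists_dvd_sub_mul_sq hsq ε.isUnit hδ (a := a) (by
    rw [← hnorm]
    linear_combination -norm δ * hε)
  exact ⟨ε, p, ε.isUnit, hp⟩

theorem isDomain_of_forall_norm_eq_zero [IsDomain R] {d e : R}
    (h : ∀ z : QuadraticAlgebra R d e, norm z = 0 → z = 0) : IsDomain (QuadraticAlgebra R d e) :=
  have : NoZeroDivisors (QuadraticAlgebra R d e) :=
    ⟨fun {y z} hyz ↦
      (mul_eq_zero.1 (by rw [← map_mul, hyz, QuadraticAlgebra.norm_zero])).imp (h y) (h z)⟩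
  NoZeroDivisors.to_isDomain _

end QuadraticRing

section Polynomial

theorem degree_mul_sq_lt {R : Type*} [Semiring R] {p q : R[X]} {n k : ℕ}
    (hp : p ∈ degreeLT R n) (hk : q.natDegree + 2 * n ≤ k + 1) : (q * p ^ 2).degree < k := by
  obtain rfl | hp0 := eq_or_ne p 0
  · simp
  have hpn : p.natDegree < n := (natDegree_lt_iff_degree_lt hp0).2 (mem_degreeLT.1 hp)
  have hdeg : (q * p ^ 2).natDegree ≤ q.natDegree + 2 * p.natDegree :=
    natDegree_mul_le_of_le le_rfl natDegree_pow_le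
  exact degree_le_natDegree.trans_lt (by exact_mod_cast (by omega))

theorem finrank_degreeLT (R : Type*) [Ring R] [StrongRankCondition R] (n : ℕ) :
    Module.finrank R (degreeLT R n) = n := by
  rw [(degreeLTEquiv R n).finrank_eq, Module.finrank_fin_fun]

variable {K : Type*} [Field K]

/-- The polynomial analogue of Thue's lemma on small solutions of linear congruences. -/
theorem exists_ne_zero_forall_dvd_of_sum_natDegree_lt {ι κ : Type*} [Fintype ι] [Fintype κ]
    {m : κ → K[X]} (hm : ∀ k, m k ≠ 0) {n : ι → ℕ} (hn : ∑ k, (m k).natDegree < ∑ i, n i)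
    (φ : κ → (ι → K[X]) →ₗ[K] K[X]) :
    ∃ u : ι → K[X], u ≠ 0 ∧ (∀ i, u i ∈ degreeLT K (n i)) ∧ ∀ k, m k ∣ φ k u := by
  have _ (i : ι) : Module.Finite K (degreeLT K (n i)) := .equiv (degreeLTEquiv K (n i)).symm
  have _ (k : κ) : Module.Finite K (K[X] ⧸ Ideal.span {m k}) :=
    (AdjoinRoot.powerBasis (hm k)).finite
  let incl : (∀ i, degreeLT K (n i)) →ₗ[K] ι → K[X] :=
    LinearMap.pi fun i ↦ (degreeLT K (n i)).subtype ∘ₗ LinearMap.proj i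
  let T : (∀ i, degreeLT K (n i)) →ₗ[K] ∀ k, K[X] ⧸ Ideal.span {m k} :=
    LinearMap.pi fun k ↦ (Ideal.Quotient.mkₐ K (Ideal.span {m k})).toLinearMap ∘ₗ φ k ∘ₗ incl
  have hker : LinearMap.ker T ≠ ⊥ := by
    apply LinearMap.ker_ne_bot_of_finrank_lt
    simpa only [Module.finrank_pi_fintype, finrank_degreeLT, finrank_quotient_span_eq_natDegree]
  obtain ⟨x, hx, hx0⟩ := (Submodule.ne_bot_iff _).1 hker
  refine ⟨incl x, fun h ↦ hx0 ?_, fun i ↦ (x i).2, fun k ↦ ?_⟩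
  · exact funext fun i ↦ Subtype.ext (congrFun h i)
  · exact Ideal.mem_span_singleton.1 (Ideal.Quotient.eq_zero_iff_mem.1 (congrFun hx k))

/-- The unknowns are chosen so small that the congruences `u ≡ ps` mod `f` and `u ≡ bv` mod `a`
force the multiple `ε(u² − fv²) − as²` of `af` to vanish; this is where the degree of `f` has to
be odd. -/
theorem exists_mul_sq_sub_mul_sq_eq {f a b c p ε : K[X]} (hodd : Odd f.natDegree)
    (hf : b ^ 2 - a * c = f) (ha : a ≠ 0) (hcop : IsCoprime a f) (hε : ε.natDegree = 0)
    (hp : f ∣ a - ε * p ^ 2) :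
    ∃ u v s : K[X], ¬(u = 0 ∧ v = 0 ∧ s = 0) ∧ a ∣ u - b * v ∧
      ε * (u ^ 2 - f * v ^ 2) = a * s ^ 2 := by
  have hf0 : f ≠ 0 := by rintro rfl; simp at hodd
  let π (i : Fin 3) : (Fin 3 → K[X]) →ₗ[K] K[X] := LinearMap.proj i
  obtain ⟨y, hy0, hdeg, hdvd⟩ := exists_ne_zero_forall_dvd_of_sum_natDegree_lt (m := ![f, a])
    (n := ![(f.natDegree + a.natDegree + 1) / 2, (a.natDegree + 1) / 2, (f.natDegree + 1) / 2])
    (by simp [Fin.forall_fin_two, hf0, ha])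
    (by
      obtain ⟨j, hj⟩ := hodd
      simp only [Fin.sum_univ_two, Fin.sum_univ_three, Matrix.cons_val]
      omega)
    ![π 0 - LinearMap.mulLeft K p ∘ₗ π 2, π 0 - LinearMap.mulLeft K b ∘ₗ π 1]
  obtain ⟨k, hk⟩ : f ∣ y 0 - p * y 2 := hdvd 0
  obtain ⟨w, hw⟩ : a ∣ y 0 - b * y 1 := hdvd 1
  have h0 : y 0 ∈ degreeLT K ((f.natDegree + a.natDegree + 1) / 2) := hdeg 0
  have h1 : y 1 ∈ degreeLT K ((a.natDegree + 1) / 2) := hdeg 1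
  have h2 : y 2 ∈ degreeLT K ((f.natDegree + 1) / 2) := hdeg 2
  have hdvd_a : a ∣ ε * y 0 ^ 2 - ε * f * y 1 ^ 2 - a * y 2 ^ 2 :=
    ⟨ε * w * (y 0 + b * y 1) + ε * c * y 1 ^ 2 - y 2 ^ 2, by
      linear_combination ε * (y 0 + b * y 1) * hw + ε * y 1 ^ 2 * hf⟩
  have hdvd_f : f ∣ ε * y 0 ^ 2 - ε * f * y 1 ^ 2 - a * y 2 ^ 2 := by
    obtain ⟨l, hl⟩ := hp
    exact ⟨ε * k * (y 0 + p * y 2) - ε * y 1 ^ 2 - l * y 2 ^ 2, by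
      linear_combination ε * (y 0 + p * y 2) * hk - y 2 ^ 2 * hl⟩
  have hlt : (ε * y 0 ^ 2 - ε * f * y 1 ^ 2 - a * y 2 ^ 2).degree < (a * f).degree := by
    rw [degree_eq_natDegree (mul_ne_zero ha hf0), natDegree_mul ha hf0]
    refine (degree_sub_le _ _).trans_lt (max_lt ((degree_sub_le _ _).trans_lt (max_lt ?_ ?_)) ?_)
    · exact degree_mul_sq_lt h0 (by omega)
    · exact degree_mul_sq_lt h1 (by have := natDegree_mul_le (p := ε) (q := f); omega)
    · exact degree_mul_sq_lt h2 (by omega)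
  refine ⟨y 0, y 1, y 2, fun h ↦ hy0 (funext (Fin.forall_fin_succ.2 ⟨h.1, ?_⟩)), ⟨w, hw⟩, ?_⟩
  · exact Fin.forall_fin_two.2 h.2
  · linear_combination eq_zero_of_dvd_of_degree_lt (hcop.mul_dvd hdvd_a hdvd_f) hlt

theorem exists_form_eq_sq {f a b c p ε : K[X]} (hodd : Odd f.natDegree)
    (hf : b ^ 2 - a * c = f) (ha : a ≠ 0) (hcop : IsCoprime a f) (hε : ε.natDegree = 0)
    (hp : f ∣ a - ε * p ^ 2) :
    ∃ w v s : K[X], (w ≠ 0 ∨ v ≠ 0) ∧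
      ε * (a * w ^ 2 + 2 * b * w * v + c * v ^ 2) = s ^ 2 := by
  obtain ⟨u, v, s, h0, ⟨w, hw⟩, h⟩ := exists_mul_sq_sub_mul_sq_eq hodd hf ha hcop hε hp
  have hs : ε * (a * w ^ 2 + 2 * b * w * v + c * v ^ 2) = s ^ 2 :=
    mul_left_cancel₀ ha (by
      linear_combination h - ε * (u + a * w + b * v) * hw - ε * v ^ 2 * hf)
  refine ⟨w, v, s, ?_, hs⟩
  by_contra! hwv
  obtain ⟨rfl, rfl⟩ := hwv
  refine h0 ⟨?_, rfl, ?_⟩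
  · simpa using hw
  · simpa using hs.symm

end Polynomial

section IdealClass

/-- The class of the ideal `I` is an `n`-th power in the monoid of ideals modulo principal ideals.
Denominators are cleared, so that no fraction field is involved. -/
def IsPowClass {A : Type*} [CommRing A] (n : ℕ) (I : Ideal A) : Prop :=
  ∃ x y : A, x ≠ 0 ∧ y ≠ 0 ∧ ∃ J : Ideal A, Ideal.span {x} * I = Ideal.span {y} * J ^ n

theorem IsPowClass.map {A B : Type*} [CommRing A] [CommRing B] (e : A ≃+* B) {n : ℕ} {I : Ideal A}
    (h : IsPowClass n I) : IsPowClass n (I.map e) := by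
  obtain ⟨x, y, hx, hy, J, hJ⟩ := h
  refine ⟨e x, e y, e.map_ne_zero_iff.2 hx, e.map_ne_zero_iff.2 hy, J.map e, ?_⟩
  simpa only [Ideal.map_mul, Ideal.map_pow, Ideal.map_span, Set.image_singleton] using
    congrArg (Ideal.map e) hJ

theorem isPowClass_map_iff {A B : Type*} [CommRing A] [CommRing B] (e : A ≃+* B) {n : ℕ}
    {I : Ideal A} : IsPowClass n (I.map e) ↔ IsPowClass n I := by
  refine ⟨fun h ↦ ?_, .map e⟩
  have h' := h.map e.symm
  rwa [Ideal.map_symm, Ideal.comap_map_of_bijective e e.bijective] at h'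

variable {A F : Type*} [CommRing A] [Field F] [Algebra A F] [IsFractionRing A F]

theorem isUnit_spanSingleton {g : F} (hg : g ≠ 0) : IsUnit (spanSingleton A⁰ g) :=
  ⟨toPrincipalIdeal A F (Units.mk0 g hg), coe_toPrincipalIdeal _⟩

theorem isUnit_coeIdeal_of_mul_eq_span_singleton_s8 {I I' : Ideal A} {x : A} (hx : x ≠ 0)
    (h : I * I' = Ideal.span {x}) : IsUnit (I : FractionalIdeal A⁰ F) := by
  refine isUnit_of_mul_isUnit_left (y := (I' : FractionalIdeal A⁰ F)) ?_
  rw [← coeIdeal_mul, h, coeIdeal_span_singleton]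
  exact isUnit_spanSingleton (IsFractionRing.to_map_eq_zero_iff.not.2 hx)

theorem exists_isUnit_eq_spanSingleton_mul_pow_iff [IsDomain A] {n : ℕ} {I : Ideal A} (hn : n ≠ 0)
    (hI : IsUnit (I : FractionalIdeal A⁰ F)) :
    (∃ J : FractionalIdeal A⁰ F, IsUnit J ∧ ∃ g : F, g ≠ 0 ∧
      (I : FractionalIdeal A⁰ F) = spanSingleton A⁰ g * J ^ n) ↔ IsPowClass n I := by
  constructor
  · rintro ⟨J, -, g, hg, h⟩
    obtain ⟨d, J, hd, rfl⟩ := exists_eq_spanSingleton_mul J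
    have hd' : algebraMap A F d ≠ 0 := IsFractionRing.to_map_eq_zero_iff.not.2 hd
    obtain ⟨y, ⟨x, hx⟩, hyx⟩ :=
      IsLocalization.exists_mk'_eq A⁰ (g * (algebraMap A F d)⁻¹ ^ n)
    rw [mul_pow, spanSingleton_pow, ← mul_assoc, spanSingleton_mul_spanSingleton, ← hyx,
      ← coeIdeal_pow, eq_comm, mk'_mul_coeIdeal_eq_coeIdeal] at h
    refine ⟨x, y, nonZeroDivisors.ne_zero hx, ?_, J, h.symm⟩
    rintro rfl
    rw [IsLocalization.mk'_zero, eq_comm] at hyx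
    exact mul_ne_zero hg (pow_ne_zero n (inv_ne_zero hd')) hyx
  · rintro ⟨x, y, hx, hy, J, h⟩
    have hx' : x ∈ A⁰ := mem_nonZeroDivisors_of_ne_zero hx
    have hg : IsLocalization.mk' F y ⟨x, hx'⟩ ≠ 0 := IsFractionRing.mk'_eq_zero_iff_eq_zero.not.2 hy
    rw [eq_comm, ← mk'_mul_coeIdeal_eq_coeIdeal F hx', coeIdeal_pow] at h
    refine ⟨J, ?_, _, hg, h.symm⟩
    rw [← isUnit_pow_iff hn]
    exact isUnit_of_mul_isUnit_right (h ▸ hI)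

end IdealClass

section HyperellipticCurve

open QuadraticAlgebra

theorem eq_zero_of_norm_eq_zero {R : Type*} [CommRing R] [IsDomain R] {f : R[X]}
    (hodd : Odd f.natDegree) {z : QuadraticAlgebra R[X] f 0} (hz : norm z = 0) : z = 0 := by
  have hf : f ≠ 0 := by rintro rfl; simp at hodd
  have h : z.re ^ 2 = f * z.im ^ 2 := by
    rw [norm_def] at hz
    linear_combination hz
  have him : z.im = 0 := by
    by_contra him
    have hdeg := congrArg natDegree h
    rw [natDegree_pow, natDegree_mul hf (pow_ne_zero 2 him), natDegree_pow] at hdeg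
    obtain ⟨k, hk⟩ := hodd
    omega
  have hre : z.re = 0 := by simpa [him] using h
  ext <;> simp [him, hre]

variable {K : Type*} [Field K]

theorem isPowClass_formIdeal_iff [NeZero (2 : K)] {f a b c : K[X]} (hsqfree : Squarefree f)
    (hodd : Odd f.natDegree) (hrel : b ^ 2 - a * c = f) (ha : a ≠ 0) (hcop : IsCoprime a f) :
    IsPowClass 2 (formIdeal f a b) ↔ ∃ ε : K, ε ≠ 0 ∧ ∃ p : K[X], f ∣ a - C ε * p ^ 2 := by
  have h2 : IsUnit (2 : K[X]) := isUnit_C.2 (NeZero.ne (2 : K)).isUnit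
  constructor
  · rintro ⟨x, y, hx, -, J, h⟩
    obtain ⟨ε', p, hε', hp⟩ := exists_dvd_sub_mul_sq_of_span_mul_formIdeal_eq h2 hsqfree hrel
      (fun hx0 ↦ hx (eq_zero_of_norm_eq_zero hodd hx0)) h
    obtain ⟨ε, hε, rfl⟩ := isUnit_iff.1 hε'
    exact ⟨ε, hε.ne_zero, p, hp⟩
  · rintro ⟨ε, hε, p, hp⟩
    obtain ⟨w, v, s, hwv, hs⟩ := exists_form_eq_sq hodd hrel ha hcop (natDegree_C ε) hp
    obtain ⟨w, v, s, hwv, hs⟩ := exists_isCoprime_form_eq_sq hwv hs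
    obtain ⟨B, hB⟩ := exists_span_mul_formIdeal_eq_span_mul_sq h2 hsqfree hrel
      (isUnit_C.2 hε.isUnit) hwv hs
    refine ⟨_, _, ?_, ?_, _, hB⟩
    · intro h0
      obtain rfl : v = 0 := congrArg im h0
      have haw : a * w = 0 := by simpa using congrArg re h0
      exact hwv.ne_zero_or_ne_zero.elim (mul_ne_zero ha · haw) (· rfl)
    · rwa [Ne, map_eq_zero_iff _ algebraMap_injective]

/-- The quadratic ring `R[ω]`, `ω² = d`, as the quotient of `R[X]` by `X² − d`; the generator `ω`
corresponds to the class of `X`. -/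
noncomputable def quadraticAlgebraEquivAdjoinRoot {R : Type*} [CommRing R] (d : R) :
    QuadraticAlgebra R d 0 ≃ₐ[R] AdjoinRoot (X ^ 2 - C d) :=
  .ofAlgHom
    (QuadraticAlgebra.lift ⟨AdjoinRoot.root _, by
      have h := AdjoinRoot.eval₂_root (X ^ 2 - C d)
      simp only [eval₂_sub, eval₂_X_pow, eval₂_C] at h
      rw [zero_smul, add_zero, ← pow_two, ← Algebra.algebraMap_eq_smul_one,
        AdjoinRoot.algebraMap_eq]
      exact sub_eq_zero.1 h⟩)
    (AdjoinRoot.liftAlgHom _ (Algebra.ofId R _) ω (by ext <;> simp [pow_two]))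
    (by ext; simp)
    (by ext <;> simp)

theorem quadraticAlgebraEquivAdjoinRoot_omega {R : Type*} [CommRing R] (d : R) :
    quadraticAlgebraEquivAdjoinRoot d ω = AdjoinRoot.root (X ^ 2 - C d) := by
  simp [quadraticAlgebraEquivAdjoinRoot]

/-- The identification of the coordinate ring `A_f` with the quadratic ring over `K[X]`. -/
noncomputable def HypRing.equiv (f : K[X]) : QuadraticAlgebra K[X] f 0 ≃+* HypRing K f :=
  (quadraticAlgebraEquivAdjoinRoot f).toRingEquiv

theorem hypIdeal_eq_map_formIdeal (f a b : K[X]) :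
    HypIdeal K f a b = (formIdeal f a b).map (HypRing.equiv f) := by
  have hC (q : K[X]) : HypRing.equiv f (algebraMap _ _ q) = HypRing.mk K f (C q) :=
    (quadraticAlgebraEquivAdjoinRoot f).commutes q
  have hX : HypRing.equiv f ω = HypRing.mk K f X := quadraticAlgebraEquivAdjoinRoot_omega f
  rw [HypIdeal, formIdeal, Ideal.map_span, Set.image_pair, map_sub, map_sub, hC, hC, hX]

theorem isDomain_hypRing {f : K[X]} (hodd : Odd f.natDegree) : IsDomain (HypRing K f) :=
  have := isDomain_of_forall_norm_eq_zero fun _ ↦ eq_zero_of_norm_eq_zero hodd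
  (HypRing.equiv f).symm.toMulEquiv.isDomain

theorem isUnit_hypIdeal [NeZero (2 : K)] {f a b c : K[X]} (hsqfree : Squarefree f)
    (hodd : Odd f.natDegree) (hrel : b ^ 2 - a * c = f) (ha : a ≠ 0) :
    IsUnit (HypIdeal K f a b :
      FractionalIdeal (HypRing K f)⁰ (FractionRing (HypRing K f))) := by
  have := isDomain_hypRing hodd
  have h2 : IsUnit (2 : K[X]) := isUnit_C.2 (NeZero.ne (2 : K)).isUnit
  have h := isIdealNorm_formIdeal hrel (span_triple_eq_top_of_squarefree h2 (hrel ▸ hsqfree))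
  have hmap := congrArg (Ideal.map (HypRing.equiv f)) h
  rw [Ideal.map_mul, Ideal.map_span, Set.image_singleton, ← hypIdeal_eq_map_formIdeal] at hmap
  refine isUnit_coeIdeal_of_mul_eq_span_singleton_s8 ?_ hmap
  rwa [Ne, EmbeddingLike.map_eq_zero_iff, map_eq_zero_iff _ algebraMap_injective]

end HyperellipticCurve

theorem genus_map_injective_over_KX_general
    (K : Type*) [Field K] [NeZero (2 : K)]
    (f : K[X]) (hsqfree : Squarefree f) (hodd : Odd f.natDegree)
    (a b c : K[X]) (hrel : b ^ 2 - a * c = f) (hcop : IsCoprime a f) :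
    IsUnit (HypIdeal K f a b :
        FractionalIdeal (HypRing K f)⁰ (FractionRing (HypRing K f))) ∧
    ((∃ J : FractionalIdeal (HypRing K f)⁰ (FractionRing (HypRing K f)),
        IsUnit J ∧
        ∃ g : FractionRing (HypRing K f), g ≠ 0 ∧
          (HypIdeal K f a b :
              FractionalIdeal (HypRing K f)⁰ (FractionRing (HypRing K f))) =
            spanSingleton (HypRing K f)⁰ g * J ^ 2)
      ↔ ∃ ε : K, ε ≠ 0 ∧ ∃ p : K[X], f ∣ a - C ε * p ^ 2) := by
  have := isDomain_hypRing hodd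
  have ha : a ≠ 0 := by
    rintro rfl
    exact hodd.pos.ne' (natDegree_eq_zero_of_isUnit (isCoprime_zero_left.1 hcop))
  have hunit := isUnit_hypIdeal hsqfree hodd hrel ha
  refine ⟨hunit, ?_⟩
  rw [exists_isUnit_eq_spanSingleton_mul_pow_iff two_ne_zero hunit, hypIdeal_eq_map_formIdeal,
    isPowClass_map_iff]
  exact isPowClass_formIdeal_iff hsqfree hodd hrel ha hcop

/-- **Injectivity of the Genus Theory map over `K[X]`: the principal genus is the
subgroup of squares.** Let `K` be a field of characteristic `0`, `f ∈ K[X]` monic,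
squarefree, of odd degree `≥ 3`, and `A_f := K[X][Y]/⟨Y² − f⟩`. If `b² − ac = f`
with `a` coprime to `f`, then the ideal `⟨a, Y − b⟩` of `A_f` is invertible, and
its class in `Cl(A_f)` is a square (i.e. `⟨a, Y − b⟩ = (g)·J²` with `J` an
invertible fractional ideal and `g ≠ 0` in the fraction field) if and only if
`f ∣ a − ε·p²` for some `ε ∈ Kˣ` and `p ∈ K[X]`. -/
theorem genus_map_injective_over_KX
    (K : Type*) [Field K] [CharZero K]
    (f : K[X]) (hmonic : f.Monic) (hsqfree : Squarefree f)
    (hodd : Odd f.natDegree) (hdeg : 3 ≤ f.natDegree)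
    (a b c : K[X]) (hrel : b ^ 2 - a * c = f) (hcop : IsCoprime a f) :
    IsUnit (HypIdeal K f a b :
        FractionalIdeal (HypRing K f)⁰ (FractionRing (HypRing K f))) ∧
    ((∃ J : FractionalIdeal (HypRing K f)⁰ (FractionRing (HypRing K f)),
        IsUnit J ∧
        ∃ g : FractionRing (HypRing K f), g ≠ 0 ∧
          (HypIdeal K f a b :
              FractionalIdeal (HypRing K f)⁰ (FractionRing (HypRing K f))) =
            spanSingleton (HypRing K f)⁰ g * J ^ 2)
      ↔ ∃ ε : K, ε ≠ 0 ∧ ∃ p : K[X], f ∣ a - C ε * p ^ 2) :=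
  genus_map_injective_over_KX_general K f hsqfree hodd a b c hrel hcop
end

section
/- Let K be a number field, S a finite set of nonzero prime ideals of O_K, and O := O_{K,S} the ring of S-integers. Let f ∈ O_K[X] be monic, squarefree, of odd degree at least 3, and let A, B, C ∈ O[X] satisfy B² − A·C = f, with [A, 2B, C] primitive over O[X] and A coprime to f in K[X]. If the class of the ideal ⟨A, Y − B⟩ in Cl(K[X][Y]/⟨Y² − f⟩) is not a square, then for every unit ε ∈ Oˣ there exists a root ρ of f in a fixed algebraic closure K̄ of K such that ε·A(ρ) is not the square of any element z of K(ρ) satisfying v_𝔮(z) ≥ 0 at every finite place 𝔮 of K(ρ) not lying above a prime of S (i.e. ε·A(ρ) is not a square in the ring of S_ε-integers of K(ρ)). -/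
open Polynomial FractionalIdeal IntermediateField IsDedekindDomain NumberField

open scoped nonZeroDivisors

/-- The ring of `S`-integers of a number field `K`. -/
noncomputable abbrev SInt (K : Type*) [Field K] [NumberField K]
    (S : Finset (HeightOneSpectrum (𝓞 K))) : Type _ :=
  ((S : Set (HeightOneSpectrum (𝓞 K))).integer K)

noncomputable instance (K : Type*) [Field K] [NumberField K]
    (S : Finset (HeightOneSpectrum (𝓞 K))) :
    Algebra (SInt K S) (AlgebraicClosure K) :=
  ((algebraMap K (AlgebraicClosure K)).comp (algebraMap (SInt K S) K)).toAlgebra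

/-!
If `ε·A(ρ)` is a square in `K(ρ)` for every root `ρ` of `F = B² − AC`, then by the Chinese
remainder theorem `εA ≡ T² (mod F)` for some polynomial `T`. A dimension count, balanced because
`F` has odd degree, turns this congruence into a solution of `u² − F y² = εA z²` with `u ≡ By`
modulo `A`; equivalently, the form `[A, 2B, C]` takes a value `ε z²` with `z ≠ 0`, and hence takes
such a value at a coprime pair. Completing the pair to a matrix of determinant one carries
`[A, 2B, C]` to a form `[ε z², 2B', C']` without changing the class of `⟨A, Y − B⟩`. Finally
`⟨z², Y − B'⟩ = ⟨z, Y − B'⟩²`, because `B'² − ε z² C' = F` is squarefree and so `z` is coprime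
to `B'`.
-/

section QuadraticIdeals

variable {R : Type*} [CommRing R]

theorem span_pair_unimodular_comb (α β : R) {x y s t : R} (hdet : x * t - y * s = 1) :
    Ideal.span {x * α + y * β, s * α + t * β} = Ideal.span {α, β} := by
  refine le_antisymm (Ideal.span_le.2 (Set.pair_subset ?_ ?_))
    (Ideal.span_le.2 (Set.pair_subset ?_ ?_)) <;> refine Ideal.mem_span_pair.2 ?_
  · exact ⟨x, y, rfl⟩
  · exact ⟨s, t, rfl⟩
  · exact ⟨t, -y, by linear_combination α * hdet⟩
  · exact ⟨-s, x, by linear_combination β * hdet⟩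

theorem sq_sub_form_mul_form_eq (a b c : R) {x y s t : R} (hdet : x * t - y * s = 1) :
    (a * x * s + b * (x * t + y * s) + c * y * t) ^ 2 -
      (a * x ^ 2 + 2 * b * x * y + c * y ^ 2) * (a * s ^ 2 + 2 * b * s * t + c * t ^ 2) =
      b ^ 2 - a * c := by
  linear_combination (b ^ 2 - a * c) * (x * t - y * s + 1) * hdet

theorem span_singleton_mul_span_pair_of_form_change {a b c x y s t Y : R}
    (hY : Y ^ 2 = b ^ 2 - a * c) (hdet : x * t - y * s = 1) :
    Ideal.span {x * a + y * (b + Y)} * Ideal.span {a, Y - b} =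
      Ideal.span {a} * Ideal.span {a * x ^ 2 + 2 * b * x * y + c * y ^ 2,
        Y - (a * x * s + b * (x * t + y * s) + c * y * t)} := by
  have hnorm : (x * a + y * (b + Y)) * (x * a + -y * (Y - b)) =
      a * (a * x ^ 2 + 2 * b * x * y + c * y ^ 2) := by
    linear_combination -y ^ 2 * hY
  have hmixed : (x * a + y * (b + Y)) * (-s * a + t * (Y - b)) =
      a * (Y - (a * x * s + b * (x * t + y * s) + c * y * t)) := by
    linear_combination y * t * hY + a * Y * hdet
  rw [← span_pair_unimodular_comb a (Y - b) (x := x) (y := -y) (s := -s) (t := t)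
    (by linear_combination hdet)]
  simp only [Ideal.span_mul_span', Set.singleton_mul, Set.image_pair, hnorm, hmixed]

theorem span_pair_sq_eq {z b d Y : R} (hY : Y ^ 2 = b ^ 2 - z ^ 2 * d)
    (hcop : IsCoprime z (2 * b)) : Ideal.span {z, Y - b} ^ 2 = Ideal.span {z ^ 2, Y - b} := by
  obtain ⟨p, q, hpq⟩ := hcop
  have hsq : (Y - b) * (Y - b) = -d * z ^ 2 + -(2 * b) * (Y - b) := by linear_combination hY
  have hz : z ∈ Ideal.span {z, Y - b} := Ideal.mem_span_pair.2 ⟨1, 0, by ring⟩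
  have hYb : Y - b ∈ Ideal.span {z, Y - b} := Ideal.mem_span_pair.2 ⟨0, 1, by ring⟩
  refine le_antisymm ?_ (Ideal.span_le.2 (Set.pair_subset (Ideal.pow_mem_pow hz 2) ?_))
  · rw [pow_two (Ideal.span _), Ideal.span_pair_mul_span_pair, Ideal.span_le]
    simp only [Set.insert_subset_iff, Set.singleton_subset_iff, SetLike.mem_coe,
      Ideal.mem_span_pair]
    exact ⟨⟨1, 0, by ring⟩, ⟨0, z, by ring⟩, ⟨0, z, by ring⟩, -d, -(2 * b), hsq.symm⟩
  · have hcomb : Y - b = p * (z * (Y - b)) + -q * d * (z * z) + -q * ((Y - b) * (Y - b)) := by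
      linear_combination -(Y - b) * hpq + q * hsq
    have hmem := add_mem (add_mem (Ideal.mul_mem_left _ p (Ideal.mul_mem_mul hz hYb))
      (Ideal.mul_mem_left _ (-q * d) (Ideal.mul_mem_mul hz hz)))
      (Ideal.mul_mem_left _ (-q) (Ideal.mul_mem_mul hYb hYb))
    rwa [← hcomb, ← pow_two] at hmem

theorem span_pair_mul_conj_eq_span_singleton {z b d Y : R} (hY : Y ^ 2 = b ^ 2 - z ^ 2 * d)
    (hcop : IsCoprime z (2 * b)) :
    Ideal.span {z, Y - b} * Ideal.span {z, Y + b} = Ideal.span {z} := by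
  obtain ⟨p, q, hpq⟩ := hcop
  refine le_antisymm ?_ ?_
  · rw [Ideal.span_pair_mul_span_pair, Ideal.span_le]
    simp only [Set.insert_subset_iff, Set.singleton_subset_iff, SetLike.mem_coe,
      Ideal.mem_span_singleton]
    exact ⟨dvd_mul_right _ _, dvd_mul_right _ _, dvd_mul_left _ _, -(z * d),
      by linear_combination hY⟩
  · have hcomb : z = p * (z * z) + q * (z * (Y + b)) + -q * ((Y - b) * z) := by
      linear_combination -z * hpq
    rw [Ideal.span_singleton_le_iff_mem, Ideal.span_pair_mul_span_pair]
    have hmem : p * (z * z) + q * (z * (Y + b)) + -q * ((Y - b) * z) ∈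
        Ideal.span {z * z, z * (Y + b), (Y - b) * z, (Y - b) * (Y + b)} := by
      refine add_mem (add_mem ?_ ?_) ?_ <;>
        exact Ideal.mul_mem_left _ _ (Ideal.subset_span (by simp))
    rwa [← hcomb] at hmem

/-- The class of the ideal `I` of the domain `R` in the class group of `R` is a square: `I` is a
principal fractional ideal times the square of an invertible fractional ideal. -/
def IsSquareClass (I : Ideal R) : Prop :=
  ∃ J : FractionalIdeal R⁰ (FractionRing R), IsUnit J ∧ ∃ g : FractionRing R, g ≠ 0 ∧
    (I : FractionalIdeal R⁰ (FractionRing R)) = spanSingleton R⁰ g * J ^ 2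

theorem IsSquareClass.of_span_singleton_mul_eq [IsDomain R] {I J J' : Ideal R} {w a z : R}
    (ha : a ≠ 0) (hz : z ≠ 0) (hI : Ideal.span {w} * I = Ideal.span {a} * J ^ 2)
    (hJ : J * J' = Ideal.span {z}) : IsSquareClass I := by
  have hJ0 : J ≠ ⊥ := by
    rintro rfl
    exact hz (Ideal.span_singleton_eq_bot.1 (hJ.symm.trans (Ideal.bot_mul J')))
  have hw : w ≠ 0 := by
    rintro rfl
    have : Ideal.span {a} * J ^ 2 ≠ ⊥ :=
      mul_ne_zero (mt Ideal.span_singleton_eq_bot.1 ha) (pow_ne_zero 2 hJ0)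
    exact this (by rw [← hI]; simp)
  let K := FractionRing R
  have algebraMap_ne_zero {r : R} (hr : r ≠ 0) : algebraMap R K r ≠ 0 := by simpa using hr
  have hJunit : IsUnit (J : FractionalIdeal R⁰ K) := by
    refine isUnit_of_mul_isUnit_left (y := (J' : FractionalIdeal R⁰ K)) ?_
    rw [← coeIdeal_mul, hJ, coeIdeal_span_singleton]
    exact .of_mul_eq_one _ (spanSingleton_mul_inv K (algebraMap_ne_zero hz))
  refine ⟨J, hJunit, algebraMap R K a / algebraMap R K w,
    div_ne_zero (algebraMap_ne_zero ha) (algebraMap_ne_zero hw), ?_⟩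
  have hIK : spanSingleton R⁰ (algebraMap R K w) * (I : FractionalIdeal R⁰ K) =
      spanSingleton R⁰ (algebraMap R K a) * (J : FractionalIdeal R⁰ K) ^ 2 := by
    simp only [← coeIdeal_span_singleton, ← coeIdeal_mul, ← coeIdeal_pow, hI]
  calc (I : FractionalIdeal R⁰ K)
      = spanSingleton R⁰ (algebraMap R K w)⁻¹ *
          (spanSingleton R⁰ (algebraMap R K w) * (I : FractionalIdeal R⁰ K)) := by
        rw [← mul_assoc, spanSingleton_mul_spanSingleton,
          inv_mul_cancel₀ (algebraMap_ne_zero hw), spanSingleton_one, one_mul]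
    _ = _ := by
        rw [hIK, ← mul_assoc, spanSingleton_mul_spanSingleton, div_eq_inv_mul]

theorem IsSquareClass.span_pair_of_form_eq_mul_sq [IsDomain R] {a b c e x y s t z Y : R}
    (hY : Y ^ 2 = b ^ 2 - a * c) (hdet : x * t - y * s = 1) (ha : a ≠ 0) (he : IsUnit e)
    (hz : z ≠ 0) (hform : a * x ^ 2 + 2 * b * x * y + c * y ^ 2 = e * z ^ 2)
    (hcop : IsCoprime z (2 * (a * x * s + b * (x * t + y * s) + c * y * t))) :
    IsSquareClass (Ideal.span {a, Y - b}) := by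
  have hdisc : Y ^ 2 = (a * x * s + b * (x * t + y * s) + c * y * t) ^ 2 -
      z ^ 2 * (e * (a * s ^ 2 + 2 * b * s * t + c * t ^ 2)) := by
    rw [hY, ← sq_sub_form_mul_form_eq a b c hdet, hform]
    ring
  refine .of_span_singleton_mul_eq (w := x * a + y * (b + Y)) ha hz ?_
    (span_pair_mul_conj_eq_span_singleton hdisc hcop)
  rw [span_singleton_mul_span_pair_of_form_change hY hdet, hform, span_pair_sq_eq hdisc hcop,
    Ideal.span_insert, Ideal.span_singleton_mul_left_unit he, ← Ideal.span_insert]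

end QuadraticIdeals

section Squares

theorem exists_dvd_sq_sub_mul {R : Type*} [CommRing R] {d m n : R} (hmn : IsCoprime m n)
    (hm : ∃ T, m ∣ T ^ 2 - d) (hn : ∃ T, n ∣ T ^ 2 - d) : ∃ T, m * n ∣ T ^ 2 - d := by
  obtain ⟨T₁, k₁, h₁⟩ := hm
  obtain ⟨T₂, k₂, h₂⟩ := hn
  obtain ⟨u, v, huv⟩ := id hmn
  obtain ⟨T, hT⟩ : ∃ T, T = T₁ * (v * n) + T₂ * (u * m) := ⟨_, rfl⟩
  have hT₁ : T - T₁ = m * (u * (T₂ - T₁)) := by linear_combination hT + T₁ * huv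
  have hT₂ : T - T₂ = n * (v * (T₁ - T₂)) := by linear_combination hT + T₂ * huv
  refine ⟨T, hmn.mul_dvd ⟨k₁ + (T + T₁) * (u * (T₂ - T₁)), ?_⟩
    ⟨k₂ + (T + T₂) * (v * (T₁ - T₂)), ?_⟩⟩
  · linear_combination h₁ + (T + T₁) * hT₁
  · linear_combination h₂ + (T + T₂) * hT₂

theorem exists_dvd_sq_sub_of_squarefree {R : Type*} [CommRing R] [IsDomain R]
    [IsPrincipalIdealRing R] {d n : R} (hn : Squarefree n)
    (hsq : ∀ p, Prime p → p ∣ n → ∃ T, p ∣ T ^ 2 - d) : ∃ T, n ∣ T ^ 2 - d := by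
  induction n using UniqueFactorizationMonoid.induction_on_prime with
  | h₁ => exact absurd hn not_squarefree_zero
  | h₂ u hu => exact ⟨0, hu.dvd⟩
  | h₃ m p _ hp ih =>
    obtain ⟨hpm, -, hm⟩ := squarefree_mul_iff.1 hn
    exact exists_dvd_sq_sub_mul hpm.isCoprime (hsq p hp (dvd_mul_right p m))
      (ih hm fun q hq hqm => hsq q hq (hqm.mul_left p))

theorem isRelPrime_of_squarefree_sq_sub_sq_mul {R : Type*} [CommRing R] {z b d : R}
    (h : Squarefree (b ^ 2 - z ^ 2 * d)) : IsRelPrime z b := by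
  rintro p ⟨k, rfl⟩ ⟨l, rfl⟩
  exact h p ⟨l ^ 2 - k ^ 2 * d, by ring⟩

theorem eq_zero_of_sq_eq_mul_sq {R : Type*} [CommRing R] [IsDomain R] [IsIntegrallyClosed R]
    {a u y : R} (ha : ¬ IsSquare a) (h : u ^ 2 = a * y ^ 2) : y = 0 := by
  by_contra hy
  obtain ⟨v, rfl⟩ := (IsIntegrallyClosed.pow_dvd_pow_iff two_ne_zero).1 (Dvd.intro_left a h.symm)
  refine ha ⟨v, mul_right_cancel₀ (pow_ne_zero 2 hy) ?_⟩
  linear_combination -h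

theorem not_isSquare_of_odd_natDegree {R : Type*} [Semiring R] [NoZeroDivisors R] {p : R[X]}
    (hp : Odd p.natDegree) : ¬ IsSquare p := by
  rintro ⟨q, rfl⟩
  rw [← pow_two, natDegree_pow] at hp
  exact Nat.not_odd_iff_even.2 (even_two_mul _) hp

theorem exists_minpoly_dvd_sq_sub {K L : Type*} [Field K] [Field L] [Algebra K L] {ρ z : L}
    (hρ : IsIntegral K ρ) (hz : z ∈ K⟮ρ⟯) {D : K[X]} (hzD : z ^ 2 = aeval ρ D) :
    ∃ T, minpoly K ρ ∣ T ^ 2 - D := by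
  rw [← mem_toSubalgebra, adjoin_simple_toSubalgebra_of_isAlgebraic hρ.isAlgebraic,
    Algebra.adjoin_singleton_eq_range_aeval] at hz
  obtain ⟨T, rfl⟩ := hz
  exact ⟨T, minpoly.dvd K ρ (by simpa [sub_eq_zero] using hzD)⟩

theorem squarefree_map_algebraMap_of_monic {R : Type*} (K : Type*) [CommRing R]
    [IsIntegrallyClosed R] [Field K] [Algebra R K] [IsFractionRing R K] {f : R[X]} (hf : f.Monic)
    (hsq : Squarefree f) : Squarefree (f.map (algebraMap R K)) := by
  intro g hg
  have hinj := IsFractionRing.injective R K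
  have hg0 : g ≠ 0 := by
    rintro rfl
    exact (hf.map (algebraMap R K)).ne_zero (zero_dvd_iff.1 (by simpa using hg))
  obtain ⟨h, hh⟩ := IsIntegrallyClosed.eq_map_mul_C_of_dvd K hf ((dvd_mul_right g g).trans hg)
  have hlead : g.leadingCoeff ≠ 0 := leadingCoeff_ne_zero.2 hg0
  have hmonic : h.Monic := by
    refine monic_of_injective hinj (mul_right_cancel₀ hlead ?_)
    simpa using congrArg leadingCoeff hh
  have hdvd : h * h ∣ f := by
    rw [← Polynomial.map_dvd_map _ hinj (hmonic.mul hmonic), Polynomial.map_mul]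
    exact (mul_dvd_mul ⟨_, hh.symm⟩ ⟨_, hh.symm⟩).trans hg
  rw [← hh]
  exact ((hsq h hdvd).map (mapRingHom (algebraMap R K))).mul (isUnit_C.2 hlead.isUnit)

end Squares

section NormEquation

variable {K : Type*} [Field K]

theorem exists_degreeLT_dvd_sub_mul {G H : K[X]} (hG : G ≠ 0) (hH : H ≠ 0) (b T : K[X])
    {l m n : ℕ} (hlt : G.natDegree + H.natDegree < l + m + n) :
    ∃ u ∈ degreeLT K l, ∃ y ∈ degreeLT K m, ∃ z ∈ degreeLT K n,
      (u, y, z) ≠ 0 ∧ G ∣ u - b * y ∧ H ∣ u - T * z := by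
  have hfinite (k : ℕ) : Module.Finite K (degreeLT K k) :=
    .equiv (degreeLTEquiv K k).symm
  have hfinrank (k : ℕ) : Module.finrank K (degreeLT K k) = k := by
    simp [(degreeLTEquiv K k).finrank_eq]
  have := (AdjoinRoot.powerBasis hG).finite
  have := (AdjoinRoot.powerBasis hH).finite
  have hfinrank_residue (P : K[X]) : Module.finrank K (AdjoinRoot P) = P.natDegree :=
    finrank_quotient_span_eq_natDegree
  let residue (P : K[X]) : K[X] →ₗ[K] AdjoinRoot P := (AdjoinRoot.mkₐ P).toLinearMap
  let u := (degreeLT K l).subtype ∘ₗ .fst K _ (degreeLT K m × degreeLT K n)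
  let y := (degreeLT K m).subtype ∘ₗ .fst K _ (degreeLT K n) ∘ₗ .snd K (degreeLT K l) _
  let z := (degreeLT K n).subtype ∘ₗ .snd K (degreeLT K m) _ ∘ₗ .snd K (degreeLT K l) _
  let residues := (residue G ∘ₗ (u - .mulLeft K b ∘ₗ y)).prod
    (residue H ∘ₗ (u - .mulLeft K T ∘ₗ z))
  have hker : LinearMap.ker residues ≠ ⊥ := by
    apply LinearMap.ker_ne_bot_of_finrank_lt
    simp only [Module.finrank_prod, hfinrank, hfinrank_residue]
    omega
  obtain ⟨v, hv, hv0⟩ := Submodule.exists_mem_ne_zero_of_ne_bot hker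
  obtain ⟨hvG, hvH⟩ := Prod.mk.inj hv
  refine ⟨v.1, v.1.2, v.2.1, v.2.1.2, v.2.2, v.2.2.2, fun h => hv0 ?_,
    AdjoinRoot.mk_eq_zero.1 hvG, AdjoinRoot.mk_eq_zero.1 hvH⟩
  simpa [Prod.ext_iff] using h

theorem mul_sq_mem_degreeLT {p : K[X]} (q : K[X]) {k m : ℕ} (hp : p ∈ degreeLT K m)
    (hk : q.natDegree + 2 * m ≤ k + 1) : q * p ^ 2 ∈ degreeLT K k := by
  rcases eq_or_ne p 0 with rfl | hp0
  · simp
  have hpm : p.natDegree < m := (natDegree_lt_iff_degree_lt hp0).2 (mem_degreeLT.1 hp)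
  have hle : (q * p ^ 2).natDegree ≤ q.natDegree + 2 * p.natDegree :=
    natDegree_mul_le.trans_eq (by rw [natDegree_pow])
  exact mem_degreeLT.2 (degree_le_natDegree.trans_lt (by exact_mod_cast (by omega)))

theorem exists_sq_sub_mul_sq_eq {F a b c T : K[X]} {e : K} (ha : a ≠ 0) (he : e ≠ 0)
    (hodd : Odd F.natDegree) (hrel : b ^ 2 - a * c = F) (hcop : IsCoprime a F)
    (hT : F ∣ T ^ 2 - C e * a) :
    ∃ u y z : K[X], z ≠ 0 ∧ a ∣ u - b * y ∧ u ^ 2 - F * y ^ 2 = C e * a * z ^ 2 := by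
  have hF : F ≠ 0 := ne_zero_of_natDegree_gt hodd.pos
  obtain ⟨u, hu, y, hy, z, hz, hne, ⟨k, hk⟩, ⟨l, hl⟩⟩ :=
    exists_degreeLT_dvd_sub_mul ha hF b T (l := (a.natDegree + F.natDegree + 1) / 2)
      (m := (a.natDegree + 1) / 2) (n := (F.natDegree + 1) / 2) (by grind)
  have hdvd : a * F ∣ u ^ 2 - F * y ^ 2 - C e * a * z ^ 2 := by
    obtain ⟨m, hm⟩ := hT
    refine hcop.mul_dvd ⟨k * (u + b * y) + c * y ^ 2 - C e * z ^ 2, ?_⟩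
      ⟨l * (u + T * z) + m * z ^ 2 - y ^ 2, ?_⟩
    · linear_combination (u + b * y) * hk + y ^ 2 * hrel
    · linear_combination (u + T * z) * hl + z ^ 2 * hm
  have hdeg : u ^ 2 - F * y ^ 2 - C e * a * z ^ 2 ∈
      degreeLT K (a.natDegree + F.natDegree) := by
    refine sub_mem (sub_mem ?_ (mul_sq_mem_degreeLT F hy (by omega)))
      (mul_sq_mem_degreeLT _ hz (by rw [natDegree_C_mul he]; omega))
    simpa using mul_sq_mem_degreeLT 1 hu (by rw [natDegree_one]; omega)
  have heq : u ^ 2 - F * y ^ 2 = C e * a * z ^ 2 := by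
    refine sub_eq_zero.1 (eq_zero_of_dvd_of_degree_lt hdvd ?_)
    rw [degree_eq_natDegree (mul_ne_zero ha hF), natDegree_mul ha hF]
    exact mem_degreeLT.1 hdeg
  refine ⟨u, y, z, ?_, ⟨k, hk⟩, heq⟩
  rintro rfl
  have hy0 : y = 0 := eq_zero_of_sq_eq_mul_sq (u := u) (not_isSquare_of_odd_natDegree hodd)
    (by linear_combination heq)
  exact hne (by simpa [hy0] using heq)

theorem exists_isCoprime_form_eq_mul_sq {F a b c T : K[X]} {e : K} (ha : a ≠ 0) (he : e ≠ 0)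
    (hodd : Odd F.natDegree) (hrel : b ^ 2 - a * c = F) (hcop : IsCoprime a F)
    (hT : F ∣ T ^ 2 - C e * a) :
    ∃ x y z : K[X], z ≠ 0 ∧ IsCoprime x y ∧
      a * x ^ 2 + 2 * b * x * y + c * y ^ 2 = C e * z ^ 2 := by
  classical
  obtain ⟨u, y, z, hz, ⟨x, hx⟩, hu⟩ := exists_sq_sub_mul_sq_eq ha he hodd hrel hcop hT
  have hform : a * x ^ 2 + 2 * b * x * y + c * y ^ 2 = C e * z ^ 2 := by
    refine mul_left_cancel₀ ha ?_
    linear_combination hu - (u + a * x + b * y) * hx - y ^ 2 * hrel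
  have hCe : IsUnit (C e) := isUnit_C.2 he.isUnit
  have hgcd : gcd x y ≠ 0 := by
    intro h
    obtain ⟨rfl, rfl⟩ := (gcd_eq_zero_iff x y).1 h
    exact mul_ne_zero hCe.ne_zero (pow_ne_zero 2 hz) (by simpa using hform.symm)
  obtain ⟨x', y', hxy, hx', hy'⟩ : ∃ x' y', IsCoprime x' y' ∧ x = gcd x y * x' ∧ y = gcd x y * y' :=
    ⟨_, _, isCoprime_div_gcd_div_gcd_of_gcd_ne_zero hgcd,
      (EuclideanDomain.mul_div_cancel' hgcd (gcd_dvd_left x y)).symm,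
      (EuclideanDomain.mul_div_cancel' hgcd (gcd_dvd_right x y)).symm⟩
  generalize gcd x y = g at hgcd hx' hy'
  subst hx' hy'
  obtain ⟨z', rfl⟩ : g ∣ z := by
    refine (IsIntegrallyClosed.pow_dvd_pow_iff two_ne_zero).1 (hCe.dvd_mul_left.1 ?_)
    exact ⟨a * x' ^ 2 + 2 * b * x' * y' + c * y' ^ 2, by linear_combination -hform⟩
  refine ⟨x', y', z', right_ne_zero_of_mul hz, hxy, mul_left_cancel₀ (pow_ne_zero 2 hgcd) ?_⟩
  linear_combination hform

end NormEquation

namespace HypRing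

variable {K : Type*} [Field K] {F : K[X]}

theorem mk_X_sq : mk K F X ^ 2 = mk K F (C F) := by
  rw [← map_pow, ← sub_eq_zero, ← map_sub]
  exact Ideal.Quotient.eq_zero_iff_mem.2 (Ideal.mem_span_singleton_self _)

theorem isDomain (hF : ¬ IsSquare F) : IsDomain (HypRing K F) := by
  have hmonic : (X ^ 2 - C F : K[X][X]).Monic := monic_X_pow_sub_C F two_ne_zero
  have hdeg : (X ^ 2 - C F : K[X][X]).natDegree = 2 := natDegree_X_pow_sub_C
  have hirr : Irreducible (X ^ 2 - C F : K[X][X]) := by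
    rw [hmonic.irreducible_iff_roots_eq_zero_of_degree_le_three hdeg.ge (by omega)]
    refine Multiset.eq_zero_of_forall_notMem fun r hr => hF ⟨r, ?_⟩
    simpa [sub_eq_zero, pow_two, eq_comm] using (mem_roots'.1 hr).2
  exact (Ideal.Quotient.isDomain_iff_prime _).2
    ((Ideal.span_singleton_prime hmonic.ne_zero).2 hirr.prime)

theorem mk_C_ne_zero {a : K[X]} (ha : a ≠ 0) : mk K F (C a) ≠ 0 := by
  intro h
  refine (monic_X_pow_sub_C F two_ne_zero).not_dvd_of_natDegree_lt (C_ne_zero.2 ha) ?_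
    (Ideal.mem_span_singleton.1 (Ideal.Quotient.eq_zero_iff_mem.1 h))
  simp

end HypRing

section HyperellipticClasses

variable {K : Type*} [Field K] [NeZero (2 : K)] {F a b c : K[X]} {e : K}

theorem isSquareClass_hypIdeal_of_form_eq_mul_sq {x y z : K[X]} (hsq : Squarefree F)
    (hF : ¬ IsSquare F) (hrel : b ^ 2 - a * c = F) (ha : a ≠ 0) (he : e ≠ 0) (hz : z ≠ 0)
    (hxy : IsCoprime x y) (hform : a * x ^ 2 + 2 * b * x * y + c * y ^ 2 = C e * z ^ 2) :
    IsSquareClass (HypIdeal K F a b) := by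
  obtain ⟨s, t, hdet⟩ : ∃ s t, x * t - y * s = 1 := by
    obtain ⟨t, s, hst⟩ := hxy
    exact ⟨-s, t, by linear_combination hst⟩
  have hcop : IsCoprime z (2 * (a * x * s + b * (x * t + y * s) + c * y * t)) := by
    have htwo : IsUnit (2 : K[X]) := by
      rw [← map_ofNat C 2]
      exact (NeZero.ne (2 : K)).isUnit.map C
    have hdisc : F = (a * x * s + b * (x * t + y * s) + c * y * t) ^ 2 -
        z ^ 2 * (C e * (a * s ^ 2 + 2 * b * s * t + c * t ^ 2)) := by
      rw [← hrel, ← sq_sub_form_mul_form_eq a b c hdet, hform]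
      ring
    rw [isCoprime_mul_unit_left_right htwo]
    exact (isRelPrime_of_squarefree_sq_sub_sq_mul (hdisc ▸ hsq)).isCoprime
  have := HypRing.isDomain hF
  let φ : K[X] →+* HypRing K F := (HypRing.mk K F).comp C
  have hideal : HypIdeal K F a b = Ideal.span {φ a, HypRing.mk K F X - φ b} := by
    simp only [HypIdeal, φ, map_sub, RingHom.comp_apply]
  rw [hideal]
  refine .span_pair_of_form_eq_mul_sq (c := φ c) (e := φ (C e)) (x := φ x) (y := φ y) (s := φ s)
    (t := φ t) (z := φ z) ?_ ?_ (HypRing.mk_C_ne_zero ha) ((isUnit_C.2 he.isUnit).map φ)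
    (HypRing.mk_C_ne_zero hz) ?_ ?_
  · have hX := HypRing.mk_X_sq (F := F)
    simpa only [map_sub, map_mul, map_pow] using hX.trans (congrArg φ hrel.symm)
  · simpa only [map_sub, map_mul, map_one] using congrArg φ hdet
  · simpa only [map_add, map_mul, map_pow, map_ofNat] using congrArg φ hform
  · simpa only [map_add, map_mul, map_ofNat] using hcop.map φ

theorem isSquareClass_hypIdeal_of_dvd_sq_sub {T : K[X]} (hsq : Squarefree F)
    (hodd : Odd F.natDegree) (hrel : b ^ 2 - a * c = F) (hcop : IsCoprime a F) (he : e ≠ 0)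
    (hT : F ∣ T ^ 2 - C e * a) : IsSquareClass (HypIdeal K F a b) := by
  have ha : a ≠ 0 := by
    rintro rfl
    exact hodd.pos.ne' (natDegree_eq_zero_of_isUnit (isCoprime_zero_left.1 hcop))
  obtain ⟨x, y, z, hz, hxy, hform⟩ := exists_isCoprime_form_eq_mul_sq ha he hodd hrel hcop hT
  exact isSquareClass_hypIdeal_of_form_eq_mul_sq hsq (not_isSquare_of_odd_natDegree hodd) hrel
    ha he hz hxy hform

theorem nonsquare_class_value_not_square_in_S_integers_general {L : Type*} [Field L]
    [Algebra K L] (hsq : Squarefree F) (hodd : Odd F.natDegree)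
    (hsplits : (F.map (algebraMap K L)).Splits) (hrel : b ^ 2 - a * c = F)
    (hcop : IsCoprime a F) (hclass : ¬ IsSquareClass (HypIdeal K F a b)) (he : e ≠ 0) :
    ∃ ρ : L, aeval ρ F = 0 ∧
      ¬ ∃ z ∈ K⟮ρ⟯, z ^ 2 = algebraMap K L e * aeval ρ a := by
  by_contra! hval
  have hF : F ≠ 0 := hsq.ne_zero
  obtain ⟨T, hT⟩ : ∃ T, F ∣ T ^ 2 - C e * a := by
    refine exists_dvd_sq_sub_of_squarefree hsq fun P hP hPF => ?_
    obtain ⟨ρ, hρ⟩ : ∃ ρ : L, aeval ρ P = 0 := by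
      have hPsplits := hsplits.of_dvd (map_ne_zero hF) (map_dvd (algebraMap K L) hPF)
      simpa [eval_map_algebraMap] using
        hPsplits.exists_eval_eq_zero (by simpa using (degree_pos_of_irreducible hP.irreducible).ne')
    obtain ⟨z, hz, hz2⟩ := hval ρ (aeval_eq_zero_of_dvd_aeval_eq_zero hPF hρ)
    have hint : IsIntegral K ρ := IsAlgebraic.isIntegral ⟨P, hP.ne_zero, hρ⟩
    obtain ⟨T, hT⟩ := exists_minpoly_dvd_sq_sub hint hz (D := C e * a) (by simpa using hz2)
    have hassoc := (minpoly.irreducible hint).associated_of_dvd hP.irreducible (minpoly.dvd K ρ hρ)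
    exact ⟨T, hassoc.symm.dvd.trans hT⟩
  exact hclass (isSquareClass_hypIdeal_of_dvd_sq_sub hsq hodd hrel hcop he hT)

end HyperellipticClasses

/-- **Integral version: a non-square class has a value which is a non-square
`S`-integer at some root of `f`.** `K` is a number field, `O = O_{K,S}` its ring
of `S`-integers, `f ∈ O_K[X]` monic squarefree of odd degree `≥ 3`,
`[A,2B,C]` a primitive form over `O[X]` with `B² − AC = f` and `A` coprime to
`f` in `K[X]`. If the class of `⟨A, Y − B⟩` in `Cl(K[X][Y]/⟨Y² − f⟩)` is not a
square, then for every `ε ∈ Oˣ` there is a root `ρ` of `f` in `K̄` such that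
`ε·A(ρ)` is not the square of any element of `K(ρ)` which is integral over `O`
(i.e. of any `S_ε`-integer of `K(ρ)`). -/
theorem nonsquare_class_value_not_square_in_S_integers
    (K : Type*) [Field K] [NumberField K]
    (S : Finset (HeightOneSpectrum (𝓞 K)))
    (f : Polynomial (𝓞 K)) (hmonic : f.Monic)
    (hsqfree : Squarefree f)
    (hodd : Odd f.natDegree) (hdeg : 3 ≤ f.natDegree)
    (A B C : Polynomial (SInt K S))
    (hrel : B ^ 2 - A * C = f.map (algebraMap (𝓞 K) (SInt K S)))
    (hprim : Ideal.span {A, 2 * B, C} = (⊤ : Ideal (Polynomial (SInt K S))))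
    (hcop : IsCoprime (A.map (algebraMap (SInt K S) K)) (f.map (algebraMap (𝓞 K) K)))
    (hnotsq : ¬ ∃ J : FractionalIdeal (HypRing K (f.map (algebraMap (𝓞 K) K)))⁰
          (FractionRing (HypRing K (f.map (algebraMap (𝓞 K) K)))),
        IsUnit J ∧
        ∃ g : FractionRing (HypRing K (f.map (algebraMap (𝓞 K) K))), g ≠ 0 ∧
          (HypIdeal K (f.map (algebraMap (𝓞 K) K)) (A.map (algebraMap (SInt K S) K))
              (B.map (algebraMap (SInt K S) K)) :
              FractionalIdeal (HypRing K (f.map (algebraMap (𝓞 K) K)))⁰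
                (FractionRing (HypRing K (f.map (algebraMap (𝓞 K) K))))) =
            spanSingleton (HypRing K (f.map (algebraMap (𝓞 K) K)))⁰ g * J ^ 2) :
    ∀ ε : (SInt K S)ˣ, ∃ ρ : AlgebraicClosure K,
      aeval ρ (f.map (algebraMap (𝓞 K) K)) = 0 ∧
      ¬ ∃ z : AlgebraicClosure K, z ∈ K⟮ρ⟯ ∧ IsIntegral (SInt K S) z ∧
          z ^ 2 = algebraMap K (AlgebraicClosure K) ((ε : SInt K S) : K)
              * aeval ρ (A.map (algebraMap (SInt K S) K)) := by
  intro ε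
  obtain ⟨ρ, hρ, hval⟩ := nonsquare_class_value_not_square_in_S_integers_general
    (K := K) (L := AlgebraicClosure K) (c := C.map (algebraMap (SInt K S) K))
    (e := ((ε : SInt K S) : K)) (squarefree_map_algebraMap_of_monic K hmonic hsqfree)
    (by rwa [hmonic.natDegree_map]) (IsAlgClosed.splits _)
    (by
      rw [← Polynomial.map_pow, ← Polynomial.map_mul, ← Polynomial.map_sub, hrel,
        Polynomial.map_map]
      rfl) hcop hnotsq fun h => ε.ne_zero (Subtype.ext h)
  exact ⟨ρ, hρ, fun ⟨z, hz, _, hz2⟩ => hval ⟨z, hz, hz2⟩⟩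
end

section
/- Let K be a number field and S a finite set of nonzero prime ideals of O_K such that 2 and the discriminant of f are invertible in O := O_{K,S} (i.e. S contains every prime dividing 2·disc(f)), where f ∈ O_K[X] is monic, squarefree, of odd degree at least 3. Let A := O[X][Y]/⟨Y² − f⟩ and B := K[X][Y]/⟨Y² − f⟩. Then for every nonzero ideal J of B there exist an ideal I of A, invertible as a fractional ideal of A, and nonzero elements g, h ∈ B such that ⟨g⟩·J = ⟨h⟩·(I·B) as ideals of B, where I·B is the ideal of B generated by the image of I. (This is the surjectivity of the restriction-to-the-generic-fibre map Pic(A) → Pic(B).) -/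
open Polynomial FractionalIdeal IsDedekindDomain NumberField

open scoped nonZeroDivisors

/-- `R[X][Y]/⟨Y² − f⟩` for a commutative ring `R`. -/
noncomputable def HypRingR (R : Type*) [CommRing R] (f : Polynomial R) : Type _ :=
  Polynomial (Polynomial R) ⧸ Ideal.span {(X : Polynomial (Polynomial R)) ^ 2 - C f}

noncomputable instance (R : Type*) [CommRing R] (f : Polynomial R) : CommRing (HypRingR R f) :=
  Ideal.Quotient.commRing _

/-- The quotient map `R[X][Y] → R[X][Y]/⟨Y² − f⟩`. -/
noncomputable def HypRingR.mk (R : Type*) [CommRing R] (f : Polynomial R) :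
    Polynomial (Polynomial R) →+* HypRingR R f :=
  Ideal.Quotient.mk _

/-- Functoriality of `R[X][Y]/⟨Y² − f⟩` in the base ring `R`: a ring homomorphism
`φ : R → S` induces `R[X][Y]/⟨Y² − f⟩ → S[X][Y]/⟨Y² − f^φ⟩`. -/
noncomputable def HypMap (R S : Type*) [CommRing R] [CommRing S] (φ : R →+* S)
    (f : Polynomial R) : HypRingR R f →+* HypRingR S (f.map φ) :=
  Ideal.Quotient.lift _
    ((HypRingR.mk S (f.map φ)).comp (Polynomial.mapRingHom (Polynomial.mapRingHom φ)))
    (by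
      intro p hp
      obtain ⟨q, hq⟩ := Ideal.mem_span_singleton.mp hp
      obtain rfl := hq
      have hmap : (Polynomial.mapRingHom (Polynomial.mapRingHom φ))
          ((X : Polynomial (Polynomial R)) ^ 2 - C f) =
          (X : Polynomial (Polynomial S)) ^ 2 - C (f.map φ) := by
        simp [Polynomial.map_pow]
      have h0 : (HypRingR.mk S (f.map φ))
          ((X : Polynomial (Polynomial S)) ^ 2 - C (f.map φ)) = 0 := by
        apply Ideal.Quotient.eq_zero_iff_mem.mpr
        exact Ideal.subset_span rfl
      show (HypRingR.mk S (f.map φ))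
          ((Polynomial.mapRingHom (Polynomial.mapRingHom φ))
            (((X : Polynomial (Polynomial R)) ^ 2 - C f) * q)) = 0
      rw [_root_.map_mul, _root_.map_mul, hmap, h0, zero_mul])

/-!
The contraction `I` to `A` of a nonzero ideal `J` of `B` extends back to `J`, and it is invertible
as soon as it becomes principal in `A_m` for every maximal ideal `m` of `A`. If `m` lies over `0` in
`O`, then `A_m` is a localization of the Dedekind domain `B`, hence a principal ideal ring. If `m`
lies over `p ≠ 0`, then `A ⧸ pA` is a Dedekind domain, because `Y² = f` has good reduction at `p`,
so the image of `I` in `A_m ⧸ pA_m` is principal. Nonzero elements of `O` act injectively on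
`A ⧸ I`, which gives `I ∩ pA = pI`, and by Nakayama's lemma a generator of the image of `I` lifts to
a generator of `I A_m`.

`B` and the fibres `A ⧸ pA` are rings `k[X][√f]` with `f` squarefree and `2 ≠ 0` in `k`; these are
integrally closed because the trace and the norm of an integral element `x + y√f` of `k(X)(√f)` are
polynomials, so that first `x` and then `f y²` are polynomials, and `f` cannot absorb a square
denominator.
-/

/-! ### Ideals contracted from the generic fibre -/

theorem exists_forall_mul_mem_of_map_le {R : Type*} [CommRing R] (M : Submonoid R) (L : Type*)
    [CommRing L] [Algebra R L] [IsLocalization M L] {I J : Ideal R} (hI : I.FG)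
    (h : I.map (algebraMap R L) ≤ J.map (algebraMap R L)) :
    ∃ s ∈ M, ∀ y ∈ I, s * y ∈ J := by
  induction I, hI using Submodule.fg_induction with
  | singleton y =>
    have hy := h (Ideal.mem_map_of_mem _ (Submodule.mem_span_singleton_self y))
    obtain ⟨s, hs, hsy⟩ := (IsLocalization.algebraMap_mem_map_algebraMap_iff M L J y).mp hy
    refine ⟨s, hs, fun z hz => ?_⟩
    obtain ⟨c, rfl⟩ := Submodule.mem_span_singleton.mp hz
    rw [smul_eq_mul, mul_left_comm]
    exact J.mul_mem_left c hsy
  | sup I₁ I₂ _ _ ih₁ ih₂ =>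
    rw [Ideal.map_sup, sup_le_iff] at h
    obtain ⟨s, hs, hsI⟩ := ih₁ h.1
    obtain ⟨t, ht, htI⟩ := ih₂ h.2
    refine ⟨s * t, mul_mem hs ht, fun z hz => ?_⟩
    obtain ⟨y₁, hy₁, y₂, hy₂, rfl⟩ := Submodule.mem_sup.mp hz
    have : s * t * (y₁ + y₂) = t * (s * y₁) + s * (t * y₂) := by ring
    rw [this]
    exact add_mem (J.mul_mem_left _ (hsI _ hy₁)) (J.mul_mem_left _ (htI _ hy₂))

theorem exists_dvd_mul_of_isPrincipal_map {R : Type*} [CommRing R] (M : Submonoid R) (L : Type*)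
    [CommRing L] [Algebra R L] [IsLocalization M L] {I : Ideal R} (hI : I.FG)
    (h : (I.map (algebraMap R L)).IsPrincipal) :
    ∃ x ∈ I, ∃ s ∈ M, ∀ y ∈ I, x ∣ s * y := by
  obtain ⟨g, hg⟩ := h.principal
  have hgI : g ∈ I.map (algebraMap R L) := hg ▸ Submodule.mem_span_singleton_self g
  obtain ⟨⟨x, t⟩, hxt⟩ := (IsLocalization.mem_map_algebraMap_iff M L).mp hgI
  have hle : I.map (algebraMap R L) ≤ (Ideal.span {(x : R)}).map (algebraMap R L) := by
    rw [hg, Ideal.map_span, Set.image_singleton, ← hxt]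
    exact (Ideal.span_singleton_mul_right_unit (IsLocalization.map_units L t) g).ge
  obtain ⟨s, hs, hsI⟩ := exists_forall_mul_mem_of_map_le M L hI hle
  exact ⟨x, x.2, s, hs, fun y hy => Ideal.mem_span_singleton.mp (hsI y hy)⟩

theorem div_mem_inv_coeIdeal {R K : Type*} [CommRing R] [IsDomain R] [Field K] [Algebra R K]
    [IsFractionRing R K] {I : Ideal R} (hI : I ≠ ⊥) {x s : R} (hx : x ≠ 0)
    (h : ∀ y ∈ I, x ∣ s * y) :
    algebraMap R K s / algebraMap R K x ∈ (I : FractionalIdeal R⁰ K)⁻¹ := by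
  have hx' : algebraMap R K x ≠ 0 := by simpa using hx
  rw [mem_inv_iff (coeIdeal_ne_zero.mpr hI)]
  intro y' hy'
  obtain ⟨y, hy, rfl⟩ := (mem_coeIdeal _).mp hy'
  obtain ⟨c, hc⟩ := h y hy
  rw [div_mul_eq_mul_div, ← map_mul, hc, map_mul, mul_div_cancel_left₀ _ hx']
  exact (mem_one_iff _).mpr ⟨c, rfl⟩

theorem isUnit_coeIdeal_of_isPrincipal_localization {R : Type*} [CommRing R] [IsDomain R]
    (K : Type*) [Field K] [Algebra R K] [IsFractionRing R K]
    {I : Ideal R} (hFG : I.FG) (hI : I ≠ ⊥)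
    (h : ∀ (m : Ideal R) [m.IsMaximal],
      (I.map (algebraMap R (Localization.AtPrime m))).IsPrincipal) :
    IsUnit (I : FractionalIdeal R⁰ K) := by
  obtain ⟨Q, hQ⟩ := le_one_iff_exists_coeIdeal.mp
    (mul_one_div_le_one (I := (I : FractionalIdeal R⁰ K)))
  rw [← inv_eq] at hQ
  rw [← mul_inv_cancel_iff_isUnit, ← hQ, coeIdeal_eq_one, Ideal.one_eq_top]
  by_contra hne
  obtain ⟨m, hm, hQm⟩ := Ideal.exists_le_maximal Q hne
  obtain ⟨x, hxI, s, hs, hdvd⟩ := exists_dvd_mul_of_isPrincipal_map m.primeCompl _ hFG (h m)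
  have hx : x ≠ 0 := by
    rintro rfl
    obtain ⟨y, hy, hy₀⟩ := Submodule.exists_mem_ne_zero_of_ne_bot hI
    have : s * y = 0 := zero_dvd_iff.mp (hdvd y hy)
    exact hs ((mul_eq_zero.mp this).resolve_right hy₀ ▸ m.zero_mem)
  have hsQ : algebraMap R K s ∈ (Q : FractionalIdeal R⁰ K) := by
    rw [hQ, ← mul_div_cancel₀ (algebraMap R K s) (b := algebraMap R K x) (by simpa using hx)]
    exact mul_mem_mul (mem_coeIdeal_of_mem _ hxI) (div_mem_inv_coeIdeal hI hx hdvd)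
  obtain ⟨s', hs', hss'⟩ := (mem_coeIdeal _).mp hsQ
  exact hs (IsFractionRing.injective R K hss' ▸ hQm hs')

theorem isPrincipal_of_isPrincipal_map_quotient {R : Type*} [CommRing R] [IsLocalRing R]
    {I q : Ideal R} (hI : I.FG) (hq : q ≠ ⊤) (hIq : I ⊓ q ≤ q * I)
    (h : (I.map (Ideal.Quotient.mk q)).IsPrincipal) : I.IsPrincipal := by
  obtain ⟨g, hg⟩ := h.principal
  have hgI : g ∈ I.map (Ideal.Quotient.mk q) := hg ▸ Submodule.mem_span_singleton_self g
  obtain ⟨x, hxI, rfl⟩ :=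
    (Ideal.mem_map_iff_of_surjective _ Ideal.Quotient.mk_surjective).mp hgI
  refine ⟨x, le_antisymm ?_ ((Submodule.span_singleton_le_iff_mem _ _).mpr hxI)⟩
  have hqJ : q ≤ (⊥ : Ideal R).jacobson :=
    (IsLocalRing.le_maximalIdeal hq).trans (IsLocalRing.maximalIdeal_le_jacobson ⊥)
  refine Submodule.le_of_le_smul_of_le_jacobson_bot hI hqJ fun y hy => ?_
  have hy' : Ideal.Quotient.mk q y ∈ Submodule.span _ {Ideal.Quotient.mk q x} :=
    hg ▸ Ideal.mem_map_of_mem _ hy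
  obtain ⟨c', hc'⟩ := Ideal.mem_span_singleton'.mp hy'
  obtain ⟨c, rfl⟩ := Ideal.Quotient.mk_surjective c'
  have hyc : y - c * x ∈ I ⊓ q :=
    ⟨I.sub_mem hy (I.mul_mem_left c hxI), Ideal.Quotient.eq.mp (by rw [map_mul, hc'])⟩
  exact Submodule.mem_sup.mpr ⟨c * x, Ideal.mem_span_singleton'.mpr ⟨c, rfl⟩, y - c * x, hIq hyc,
    add_sub_cancel _ _⟩

theorem isPrincipalIdealRing_of_isLocalization_of_isLocalRing {D : Type*} [CommRing D]
    [IsDedekindDomain D] {M : Submonoid D} (hM : M ≤ D⁰) (S : Type*) [CommRing S] [Algebra D S]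
    [IsLocalization M S] [IsLocalRing S] : IsPrincipalIdealRing S := by
  have : IsDomain S := IsLocalization.isDomain_of_le_nonZeroDivisors S hM
  have : IsDedekindDomain S := IsLocalization.isDedekindDomain D hM S
  refine .of_finite_maximals ((Set.finite_singleton (IsLocalRing.maximalIdeal S)).subset ?_)
  exact fun m hm => IsLocalRing.eq_maximalIdeal hm

theorem isPrincipal_map_of_isDedekindDomain_localization {A B : Type*} [CommRing A] [CommRing B]
    [Algebra A B] {M : Submonoid A} [IsLocalization M B] [IsDedekindDomain B] {m : Ideal A}
    [m.IsPrime] (hM : M ≤ m.primeCompl) (L : Type*) [CommRing L] [Algebra A L]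
    [IsLocalization.AtPrime L m] (I : Ideal A) : (I.map (algebraMap A L)).IsPrincipal := by
  let := IsLocalization.localizationAlgebraOfSubmonoidLe B L M m.primeCompl hM
  have := IsLocalization.localization_isScalarTower_of_submonoid_le B L M m.primeCompl hM
  have := IsLocalization.isLocalization_of_submonoid_le B L M m.primeCompl hM
  have := IsLocalization.AtPrime.isLocalRing L m
  have hM' : m.primeCompl.map (algebraMap A B) ≤ B⁰ := by
    refine le_nonZeroDivisors_of_noZeroDivisors ?_
    rintro ⟨s, hs, hs₀⟩
    have hunit : IsUnit (algebraMap A L s) := IsLocalization.map_units L (⟨s, hs⟩ : m.primeCompl)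
    rw [IsScalarTower.algebraMap_apply A B L, hs₀, map_zero] at hunit
    exact not_isUnit_zero hunit
  have := isPrincipalIdealRing_of_isLocalization_of_isLocalRing hM' L
  exact IsPrincipalIdealRing.principal _

theorem isPrincipal_map_of_isDedekindDomain_quotient {A : Type*} [CommRing A] {m q I : Ideal A}
    [m.IsPrime] [IsDedekindDomain (A ⧸ q)] (hqm : q ≤ m) (hI : I.FG) (hIq : I ⊓ q ≤ q * I)
    (L : Type*) [CommRing L] [Algebra A L] [IsLocalization.AtPrime L m] :
    (I.map (algebraMap A L)).IsPrincipal := by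
  have := IsLocalization.AtPrime.isLocalRing L m
  have hqL : q.map (algebraMap A L) ≠ ⊤ := by
    rw [IsLocalization.map_algebraMap_ne_top_iff_disjoint m.primeCompl]
    exact Set.disjoint_compl_left_iff_subset.mpr hqm
  have : Nontrivial (L ⧸ q.map (algebraMap A L)) := Ideal.Quotient.nontrivial_iff.mpr hqL
  have := IsLocalRing.of_surjective' (Ideal.Quotient.mk (q.map (algebraMap A L)))
    Ideal.Quotient.mk_surjective
  have hM : Algebra.algebraMapSubmonoid (A ⧸ q) m.primeCompl ≤ (A ⧸ q)⁰ := by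
    refine le_nonZeroDivisors_of_noZeroDivisors ?_
    rintro ⟨x, hx, hx₀⟩
    exact hx (hqm (Ideal.Quotient.eq_zero_iff_mem.mp hx₀))
  have := isPrincipalIdealRing_of_isLocalization_of_isLocalRing hM (L ⧸ q.map (algebraMap A L))
  refine isPrincipal_of_isPrincipal_map_quotient (hI.map _) hqL ?_
    (IsPrincipalIdealRing.principal _)
  rw [← IsLocalization.map_inf m.primeCompl, ← Ideal.map_mul]
  exact Ideal.map_mono hIq

theorem inf_map_le_map_mul {O A : Type*} [CommRing O] [IsDedekindDomain O]
    [CommRing A] [IsDomain A] [Algebra O A] [FaithfulSMul O A]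
    {I : Ideal A} (hI : ∀ a : O, a ≠ 0 → ∀ y, algebraMap O A a * y ∈ I → y ∈ I)
    {p : Ideal O} (hp : p ≠ ⊥) :
    I ⊓ p.map (algebraMap O A) ≤ p.map (algebraMap O A) * I := by
  -- Since `p` divides some `⟨a⟩` with `a ≠ 0`, the claim reduces to `I ∩ aA ⊆ aI`.
  set P := p.map (algebraMap O A)
  obtain ⟨a, hap, ha⟩ := Submodule.exists_mem_ne_zero_of_ne_bot hp
  obtain ⟨q, hq⟩ := Ideal.dvd_span_singleton.mpr hap
  have hPQ : Ideal.span {algebraMap O A a} = P * q.map (algebraMap O A) := by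
    rw [← Set.image_singleton, ← Ideal.map_span, hq, Ideal.map_mul]
  have hQ : (I ⊓ P) * q.map (algebraMap O A) ≤ Ideal.span {algebraMap O A a} * I := by
    refine Ideal.mul_le.mpr fun y hy z hz => ?_
    have hyz : y * z ∈ Ideal.span {algebraMap O A a} := hPQ ▸ Ideal.mul_mem_mul hy.2 hz
    obtain ⟨w, hw⟩ := Ideal.mem_span_singleton.mp hyz
    have hwI : w ∈ I := hI a ha w (hw ▸ I.mul_mem_right z hy.1)
    exact hw ▸ Ideal.mul_mem_mul (Ideal.mem_span_singleton_self _) hwI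
  have : Ideal.span {algebraMap O A a} * (I ⊓ P) ≤ Ideal.span {algebraMap O A a} * (P * I) :=
    calc Ideal.span {algebraMap O A a} * (I ⊓ P) = P * ((I ⊓ P) * q.map (algebraMap O A)) := by
          rw [hPQ]; ring
      _ ≤ P * (Ideal.span {algebraMap O A a} * I) := Ideal.mul_mono_right hQ
      _ = _ := mul_left_comm _ _ _
  have ha' : algebraMap O A a ≠ 0 := by simpa using ha
  exact (Ideal.span_singleton_mul_right_mono ha').mp this

theorem isUnit_coeIdeal_under {O A B : Type*} [CommRing O] [IsDedekindDomain O]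
    [CommRing A] [IsDomain A] [IsNoetherianRing A] [Algebra O A] [FaithfulSMul O A]
    [CommRing B] [IsDedekindDomain B] [Algebra A B]
    [IsLocalization (Algebra.algebraMapSubmonoid A O⁰) B]
    (hA : ∀ p : Ideal O, p.IsPrime → p ≠ ⊥ → IsDedekindDomain (A ⧸ p.map (algebraMap O A)))
    (K : Type*) [Field K] [Algebra A K] [IsFractionRing A K] {J : Ideal B} (hJ : J ≠ ⊥) :
    IsUnit (J.under A : FractionalIdeal A⁰ K) := by
  have hI : J.under A ≠ ⊥ := by
    intro h
    rw [← IsLocalization.map_under (Algebra.algebraMapSubmonoid A O⁰) B J, h, Ideal.map_bot] at hJ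
    exact hJ rfl
  refine isUnit_coeIdeal_of_isPrincipal_localization K (IsNoetherian.noetherian _) hI fun m _ => ?_
  by_cases hp : m.under O = ⊥
  · refine isPrincipal_map_of_isDedekindDomain_localization (B := B)
      (M := Algebra.algebraMapSubmonoid A O⁰) (m := m) ?_ _ _
    rintro _ ⟨a, ha, rfl⟩ ham
    exact nonZeroDivisors.ne_zero ha (hp ▸ ham : a ∈ (⊥ : Ideal O))
  · have := hA _ inferInstance hp
    refine isPrincipal_map_of_isDedekindDomain_quotient Ideal.map_comap_le
      (IsNoetherian.noetherian _) (inf_map_le_map_mul (fun a ha y hay => ?_) hp) _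
    have hunit : IsUnit (algebraMap A B (algebraMap O A a)) := IsLocalization.map_units B
      (⟨_, a, mem_nonZeroDivisors_of_ne_zero ha, rfl⟩ : Algebra.algebraMapSubmonoid A O⁰)
    rw [Ideal.mem_comap, map_mul] at hay
    exact (J.unit_mul_mem_iff_mem hunit).mp hay

/-! ### Quadratic extensions -/

theorem isDomain_quadraticAlgebra {R : Type*} [CommRing R] [IsDomain R] [IsIntegrallyClosed R]
    {d : R} (hd : ¬IsSquare d) : IsDomain (QuadraticAlgebra R d 0) := by
  have hnorm (z : QuadraticAlgebra R d 0) (hz : z.norm = 0) : z = 0 := by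
    have h : z.re ^ 2 = d * z.im ^ 2 := by
      rw [QuadraticAlgebra.norm_def] at hz
      linear_combination hz
    obtain ⟨c, hc⟩ := (IsIntegrallyClosed.pow_dvd_pow_iff two_ne_zero).mp (Dvd.intro_left d h.symm)
    have him : z.im = 0 := by
      by_contra him
      refine hd ⟨c, mul_left_cancel₀ (pow_ne_zero 2 him) ?_⟩
      rw [hc] at h
      linear_combination -h
    exact QuadraticAlgebra.ext (by rw [hc, him, zero_mul]; rfl) him
  have : NoZeroDivisors (QuadraticAlgebra R d 0) := by
    refine ⟨fun {z w} hzw => ?_⟩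
    have : z.norm * w.norm = 0 := by
      rw [← map_mul, hzw, QuadraticAlgebra.norm_def]
      simp
    exact (mul_eq_zero.mp this).imp (hnorm z) (hnorm w)
  exact NoZeroDivisors.to_isDomain _

theorem not_isSquare_of_squarefree {M : Type*} [Monoid M] {d : M} (hd : Squarefree d)
    (hu : ¬IsUnit d) : ¬IsSquare d := by
  rintro ⟨r, rfl⟩
  exact hu ((hd r dvd_rfl).mul (hd r dvd_rfl))

section IsIntegral

variable {R K : Type*} [CommRing R] [CommRing K] [Algebra R K] {a b : K}
  {z : QuadraticAlgebra K a b}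

theorem isIntegral_star_quadraticAlgebra (hz : IsIntegral R z) : IsIntegral R (star z) := by
  refine hz.map_of_comp_eq (RingHom.id R) (starRingEnd _) (RingHom.ext fun r => ?_)
  simp [IsScalarTower.algebraMap_apply R K (QuadraticAlgebra K a b), starRingEnd_apply,
    QuadraticAlgebra.algebraMap_eq]

theorem isIntegral_trace_quadraticAlgebra (hz : IsIntegral R z) : IsIntegral R z.trace := by
  rw [← isIntegral_algebraMap_iff (B := QuadraticAlgebra K a b)
    QuadraticAlgebra.algebraMap_injective, QuadraticAlgebra.algebraMap_trace_eq_add_star]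
  exact hz.add (isIntegral_star_quadraticAlgebra hz)

theorem isIntegral_norm_quadraticAlgebra (hz : IsIntegral R z) : IsIntegral R z.norm := by
  rw [← isIntegral_algebraMap_iff (B := QuadraticAlgebra K a b)
    QuadraticAlgebra.algebraMap_injective, QuadraticAlgebra.algebraMap_norm_eq_mul_star]
  exact hz.mul (isIntegral_star_quadraticAlgebra hz)

end IsIntegral

/-- The base change map `⟨x, y⟩ ↦ ⟨x, y⟩` from `R[√d]` to `K[√d]`. -/
noncomputable def quadraticAlgebraBaseChange (R K : Type*) [CommRing R] [CommRing K]
    [Algebra R K] (d : R) :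
    QuadraticAlgebra R d 0 →ₐ[R] QuadraticAlgebra K (algebraMap R K d) 0 where
  toFun z := ⟨algebraMap R K z.re, algebraMap R K z.im⟩
  map_zero' := by ext <;> simp
  map_one' := QuadraticAlgebra.ext (map_one _) (map_zero _)
  map_add' z w := by ext <;> simp
  map_mul' z w := by ext <;> simp
  commutes' r := by
    rw [IsScalarTower.algebraMap_apply R K (QuadraticAlgebra K (algebraMap R K d) 0)]
    ext <;> simp

theorem isSquare_of_isSquare_algebraMap {R K : Type*} [CommRing R] [IsIntegrallyClosed R]
    [Field K] [Algebra R K] [IsFractionRing R K] {d : R}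
    (hd : IsSquare (algebraMap R K d)) : IsSquare d := by
  obtain ⟨r, hr⟩ := hd
  have hint : IsIntegral R (r ^ 2) := by
    rw [sq, ← hr]
    exact isIntegral_algebraMap
  obtain ⟨s, rfl⟩ := IsIntegrallyClosed.exists_algebraMap_eq_of_isIntegral_pow two_pos hint
  exact ⟨s, IsFractionRing.injective R K (by rw [hr, map_mul])⟩

section UFD

variable {R K : Type*} [CommRing R] [IsDomain R] [UniqueFactorizationMonoid R] [Field K]
  [Algebra R K] [IsFractionRing R K] {d : R}

theorem isInteger_of_isInteger_squarefree_mul_sq (hd : Squarefree d) {x : K}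
    (hx : IsLocalization.IsInteger R (algebraMap R K d * x ^ 2)) :
    IsLocalization.IsInteger R x := by
  obtain ⟨c, hc⟩ := hx
  set n := IsFractionRing.num R x
  set e := (IsFractionRing.den R x : R)
  have hx : algebraMap R K e * x = algebraMap R K n := by
    rw [mul_comm]
    exact (IsLocalization.eq_mk'_iff_mul_eq).mp (IsFractionRing.mk'_num_den R x).symm
  have h : e ^ 2 * c = d * n ^ 2 := by
    apply IsFractionRing.injective R K
    simp only [map_mul, map_pow, hc, ← hx]
    ring
  have hen : IsRelPrime (e ^ 2) (n ^ 2) := (IsFractionRing.num_den_reduced R x).symm.pow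
  have hed : e ^ 2 ∣ d := hen.dvd_of_dvd_mul_right (Dvd.intro c h)
  exact IsFractionRing.isInteger_of_isUnit_den (hd e (sq e ▸ hed))

theorem isInteger_re_and_im_of_isIntegral (h2 : IsUnit (2 : R)) (hd : Squarefree d)
    {z : QuadraticAlgebra K (algebraMap R K d) 0} (hz : IsIntegral R z) :
    IsLocalization.IsInteger R z.re ∧ IsLocalization.IsInteger R z.im := by
  obtain ⟨n, hn⟩ := IsIntegrallyClosed.isIntegral_iff.mp (isIntegral_norm_quadraticAlgebra hz)
  obtain ⟨t, ht⟩ := IsIntegrallyClosed.isIntegral_iff.mp (isIntegral_trace_quadraticAlgebra hz)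
  obtain ⟨u, rfl⟩ := h2.dvd (a := t)
  rw [QuadraticAlgebra.norm_def] at hn
  rw [QuadraticAlgebra.trace_def, zero_mul, add_zero, map_mul, map_ofNat] at ht
  have hre : algebraMap R K u = z.re := by
    have h2K : IsUnit (2 : K) := map_ofNat (algebraMap R K) 2 ▸ h2.map (algebraMap R K)
    exact h2K.mul_left_cancel ht
  refine ⟨⟨u, hre⟩, isInteger_of_isInteger_squarefree_mul_sq hd ⟨u ^ 2 - n, ?_⟩⟩
  rw [map_sub, map_pow, hn, hre]
  ring

end UFD

theorem isIntegrallyClosed_quadraticAlgebra {R : Type*} [CommRing R] [IsDomain R]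
    [UniqueFactorizationMonoid R] {d : R} (h2 : IsUnit (2 : R)) (hd : Squarefree d)
    (hu : ¬IsUnit d) : IsIntegrallyClosed (QuadraticAlgebra R d 0) := by
  let K := FractionRing R
  let L := QuadraticAlgebra K (algebraMap R K d) 0
  let C := QuadraticAlgebra R d 0
  have hsq : ¬IsSquare d := not_isSquare_of_squarefree hd hu
  have : IsDomain C := isDomain_quadraticAlgebra hsq
  have : Fact (∀ r : K, r ^ 2 ≠ algebraMap R K d + 0 * r) :=
    ⟨fun r hr => hsq (isSquare_of_isSquare_algebraMap (K := K) ⟨r, by linear_combination -hr⟩)⟩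
  let : Algebra C L := (quadraticAlgebraBaseChange R K d).toAlgebra
  have : IsScalarTower R C L := .of_algebraMap_eq fun r =>
    ((quadraticAlgebraBaseChange R K d).commutes r).symm
  have hinj : Function.Injective (algebraMap C L) := fun z w h =>
    QuadraticAlgebra.ext (IsFractionRing.injective R K (congrArg QuadraticAlgebra.re h))
      (IsFractionRing.injective R K (congrArg QuadraticAlgebra.im h))
  have : IsIntegralClosure C R L := by
    refine ⟨hinj, fun {z} => ⟨fun hz => ?_, ?_⟩⟩
    · obtain ⟨⟨u, hu⟩, ⟨v, hv⟩⟩ := isInteger_re_and_im_of_isIntegral h2 hd hz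
      exact ⟨⟨u, v⟩, QuadraticAlgebra.ext hu hv⟩
    · rintro ⟨y, rfl⟩
      exact (Algebra.IsIntegral.isIntegral y).algebraMap
  have := IsIntegralClosure.isFractionRing_of_finite_extension R K L C
  refine (isIntegrallyClosed_iff L).mpr fun {z} hz => ?_
  exact IsIntegralClosure.isIntegral_iff.mp (isIntegral_trans (A := C) (R := R) z hz)

theorem isDedekindDomain_quadraticAlgebra {R : Type*} [CommRing R] [IsDomain R]
    [IsPrincipalIdealRing R] {d : R} (h2 : IsUnit (2 : R)) (hd : Squarefree d) (hu : ¬IsUnit d) :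
    IsDedekindDomain (QuadraticAlgebra R d 0) := by
  have := isDomain_quadraticAlgebra (not_isSquare_of_squarefree hd hu)
  have := isIntegrallyClosed_quadraticAlgebra h2 hd hu
  have : Ring.DimensionLEOne (QuadraticAlgebra R d 0) := .of_isIntegral R _
  have : IsNoetherianRing (QuadraticAlgebra R d 0) := .of_finite R _
  have : IsDedekindRing (QuadraticAlgebra R d 0) := { }
  exact { }

theorem isDedekindDomain_of_ringEquiv {R S : Type*} [CommRing R] [IsDedekindDomain R]
    [CommRing S] (e : R ≃+* S) : IsDedekindDomain S := by
  have : IsDomain S := e.symm.toMulEquiv.isDomain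
  have : IsNoetherianRing S := isNoetherianRing_of_ringEquiv R e
  have : Ring.DimensionLEOne S := .of_ringEquiv e.symm
  have : IsIntegrallyClosed S := .of_equiv e
  have : IsDedekindRing S := { }
  exact { }

/-! ### The rings `R[X][Y]/⟨Y² − f⟩` -/

/-- `R[Y]/⟨Y² − d⟩` is the algebra `R[√d]` of pairs `x + y√d`. -/
noncomputable def adjoinRootEquivQuadraticAlgebra (R : Type*) [CommRing R] (d : R) :
    AdjoinRoot (X ^ 2 - C d) ≃ₐ[R] QuadraticAlgebra R d 0 :=
  AlgEquiv.ofAlgHom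
    (AdjoinRoot.liftAlgHom _ (Algebra.ofId R _) QuadraticAlgebra.omega (by
      simp [sq, QuadraticAlgebra.omega_mul_omega_eq_mk, QuadraticAlgebra.algebraMap_eq]))
    (QuadraticAlgebra.lift ⟨AdjoinRoot.root _, by
      have h := AdjoinRoot.eval₂_root (X ^ 2 - C d)
      rw [eval₂_sub, eval₂_pow, eval₂_X, eval₂_C, sub_eq_zero] at h
      rw [← sq, h, zero_smul, add_zero, ← Algebra.algebraMap_eq_smul_one]
      rfl⟩)
    (QuadraticAlgebra.algHom_ext (by simp))
    (AdjoinRoot.algHom_ext (by simp))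

namespace HypRingR

variable {R : Type*} [CommRing R] {f : R[X]}

/-- The identification `HypRingR R f = R[X][√f]`. -/
noncomputable def equivQuadraticAlgebra (f : R[X]) :
    HypRingR R f ≃+* QuadraticAlgebra R[X] f 0 :=
  (adjoinRootEquivQuadraticAlgebra R[X] f).toRingEquiv

theorem isDomain [IsDomain R] [IsIntegrallyClosed R] (hf : ¬IsSquare f) :
    IsDomain (HypRingR R f) :=
  have := isDomain_quadraticAlgebra hf
  (equivQuadraticAlgebra f).toMulEquiv.isDomain

theorem isDedekindDomain {k : Type*} [Field k] {f : k[X]} (h2 : (2 : k) ≠ 0) (hf : Squarefree f)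
    (hu : ¬IsUnit f) : IsDedekindDomain (HypRingR k f) := by
  have h2' : IsUnit (2 : k[X]) := map_ofNat (C (R := k)) 2 ▸ (IsUnit.mk0 _ h2).map C
  have := isDedekindDomain_quadraticAlgebra h2' hf hu
  exact isDedekindDomain_of_ringEquiv (equivQuadraticAlgebra f).symm

theorem isDedekindDomain_map {k : Type*} [Field k] (hmonic : f.Monic) (hdeg : f.natDegree ≠ 0)
    (h2 : IsUnit (2 : R)) (hf : f.Separable) (φ : R →+* k) :
    IsDedekindDomain (HypRingR k (f.map φ)) := by
  have h2k : IsUnit (2 : k) := map_ofNat φ 2 ▸ h2.map φ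
  refine isDedekindDomain h2k.ne_zero hf.map.squarefree (not_isUnit_of_natDegree_pos _ ?_)
  rw [hmonic.natDegree_map]
  exact Nat.pos_of_ne_zero hdeg

instance [IsNoetherianRing R] : IsNoetherianRing (HypRingR R f) :=
  Ideal.Quotient.isNoetherianRing _

noncomputable instance : Algebra R (HypRingR R f) :=
  inferInstanceAs (Algebra R (R[X][X] ⧸ _))

theorem algebraMap_eq : algebraMap R (HypRingR R f) = (mk R f).comp (C.comp C) := rfl

instance : FaithfulSMul R (HypRingR R f) := by
  rw [faithfulSMul_iff_algebraMap_injective]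
  have h (a : R) : equivQuadraticAlgebra f (algebraMap R _ a) = algebraMap R[X] _ (C a) :=
    (adjoinRootEquivQuadraticAlgebra R[X] f).commutes (C a)
  refine fun a b hab => C_injective (QuadraticAlgebra.algebraMap_injective (a := f) (b := 0) ?_)
  rw [← h, ← h, hab]

theorem hypMap_comp_mk {S : Type*} [CommRing S] (φ : R →+* S) :
    (HypMap R S φ f).comp (mk R f) = (mk S (f.map φ)).comp (mapRingHom (mapRingHom φ)) :=
  rfl

theorem hypMap_surjective {S : Type*} [CommRing S] {φ : R →+* S} (hφ : Function.Surjective φ) :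
    Function.Surjective (HypMap R S φ f) :=
  Ideal.Quotient.lift_surjective_of_surjective _ _ (Ideal.Quotient.mk_surjective.comp
    (map_surjective _ (map_surjective _ hφ)))

theorem map_span_mapRingHom_mapRingHom {S : Type*} [CommRing S] (φ : R →+* S) :
    (Ideal.span {X ^ 2 - C f}).map (mapRingHom (mapRingHom φ)) =
      Ideal.span {X ^ 2 - C (f.map φ)} := by
  simp [Ideal.map_span]

theorem ker_mk : RingHom.ker (mk R f) = Ideal.span {X ^ 2 - C f} := Ideal.mk_ker

theorem ker_mapRingHom_mapRingHom {S : Type*} [CommRing S] (φ : R →+* S) :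
    RingHom.ker (mapRingHom (mapRingHom φ)) = (RingHom.ker φ).map (C.comp C) := by
  rw [ker_mapRingHom, ker_mapRingHom, Ideal.map_map]

theorem ker_hypMap {S : Type*} [CommRing S] {φ : R →+* S} (hφ : Function.Surjective φ) :
    RingHom.ker (HypMap R S φ f) = (RingHom.ker φ).map (algebraMap R (HypRingR R f)) := by
  have hker : RingHom.ker ((mk S (f.map φ)).comp (mapRingHom (mapRingHom φ))) =
      Ideal.span {X ^ 2 - C f} ⊔ (RingHom.ker φ).map (C.comp C) := by
    rw [← RingHom.comap_ker, ker_mk, ← map_span_mapRingHom_mapRingHom,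
      Ideal.comap_map_of_surjective _ (map_surjective _ (map_surjective _ hφ)),
      ← RingHom.ker_eq_comap_bot, ker_mapRingHom_mapRingHom]
  calc RingHom.ker (HypMap R S φ f)
      = (RingHom.ker ((mk S (f.map φ)).comp (mapRingHom (mapRingHom φ)))).map (mk R f) :=
        Ideal.ker_quotient_lift _ _
    _ = _ := by
        rw [hker, Ideal.map_sup, (Ideal.map_eq_bot_iff_le_ker (mk R f)).mpr ker_mk.ge,
          bot_sup_eq, Ideal.map_map, algebraMap_eq]

/-- The fibre of `HypRingR R f` over `R ⧸ p` is the hyperelliptic ring of the reduction of `f`. -/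
noncomputable def quotientMapEquiv (f : R[X]) (p : Ideal R) :
    HypRingR R f ⧸ p.map (algebraMap R (HypRingR R f)) ≃+*
      HypRingR (R ⧸ p) (f.map (Ideal.Quotient.mk p)) :=
  (Ideal.quotEquivOfEq (by rw [ker_hypMap Ideal.Quotient.mk_surjective, Ideal.mk_ker])).trans
    (RingHom.quotientKerEquivOfSurjective (hypMap_surjective Ideal.Quotient.mk_surjective))

theorem isLocalization_hypMap (M : Submonoid R) {S : Type*} [CommRing S] [Algebra R S]
    [IsLocalization M S] :
    letI := (HypMap R S (algebraMap R S) f).toAlgebra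
    IsLocalization (Algebra.algebraMapSubmonoid (HypRingR R f) M)
      (HypRingR S (f.map (algebraMap R S))) := by
  let := (HypMap R S (algebraMap R S) f).toAlgebra
  let : Algebra R[X] S[X] := Polynomial.algebra R S
  let : Algebra R[X][X] S[X][X] := Polynomial.algebra R[X] S[X]
  have := Polynomial.isLocalization M S
  have := Polynomial.isLocalization (M.map C) S[X]
  have hM : Algebra.algebraMapSubmonoid (HypRingR R f) M = ((M.map C).map C).map (mk R f) :=
    SetLike.coe_injective (by simp [Algebra.algebraMapSubmonoid, algebraMap_eq, Set.image_image])
  have hker : RingHom.ker (mk S (f.map (algebraMap R S))) ≤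
      (RingHom.ker (mk R f)).map (mapRingHom (mapRingHom (algebraMap R S))) := by
    rw [ker_mk, ker_mk, map_span_mapRingHom_mapRingHom]
  rw [hM]
  exact IsLocalization.of_surjective ((M.map C).map C) S[X][X] (mk R f)
    Ideal.Quotient.mk_surjective (mk S (f.map (algebraMap R S))) Ideal.Quotient.mk_surjective
    (hypMap_comp_mk (algebraMap R S)).symm hker

end HypRingR

/-! ### `S`-integers -/

section SIntegers

variable {R K : Type*} [CommRing R] [IsDedekindDomain R] [Field K] [Algebra R K]
  [IsFractionRing R K] {S : Set (HeightOneSpectrum R)}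

theorem isUnit_algebraMap_integer {a : R} (ha₀ : a ≠ 0) (ha : ∀ v ∉ S, a ∉ v.asIdeal) :
    IsUnit (algebraMap R (S.integer K) a) := by
  have hinv : (algebraMap R K a)⁻¹ ∈ S.integer K := fun v hv => by
    rw [map_inv₀, v.valuation_eq_one_iff_notMem.mpr (ha v hv), inv_one]
  refine IsUnit.of_mul_eq_one ⟨_, hinv⟩ (Subtype.ext ?_)
  exact mul_inv_cancel₀ (by simpa using ha₀)

theorem exists_ne_zero_span_eq_pow (hR : IsMulTorsion (ClassGroup R)) {I : Ideal R} (hI : I ≠ ⊥) :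
    ∃ n ≠ 0, ∃ a ≠ 0, I ^ n = Ideal.span {a} := by
  have hI₀ : I ∈ (Ideal R)⁰ := mem_nonZeroDivisors_of_ne_zero hI
  obtain ⟨n, hn, h⟩ := (hR (ClassGroup.mk0 ⟨I, hI₀⟩)).exists_pow_eq_one
  rw [← map_pow] at h
  obtain ⟨a, ha⟩ := ((ClassGroup.mk0_eq_one_iff (I := I ^ n) (pow_mem hI₀ n)).mp h).principal
  refine ⟨n, hn.ne', a, ?_, ha⟩
  rintro rfl
  exact pow_ne_zero n hI (ha.trans (Submodule.span_singleton_eq_bot.mpr rfl))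

theorem exists_isUnit_mul_eq_algebraMap (hR : IsMulTorsion (ClassGroup R)) {x : K}
    (hx : x ∈ S.integer K) :
    ∃ a b : R, IsUnit (algebraMap R (S.integer K) a) ∧
      x * algebraMap R K a = algebraMap R K b := by
  -- A generator of a principal power of the denominator ideal of `x` is a unit outside `S`.
  let denoms : Ideal R := (1 : Submodule R K).comap (LinearMap.toSpanSingleton R K x)
  have mem_denoms (r : R) : r ∈ denoms ↔ ∃ b, x * algebraMap R K r = algebraMap R K b := by
    rw [Submodule.mem_comap, LinearMap.toSpanSingleton_apply, Submodule.mem_one, Algebra.smul_def,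
      mul_comm]
    exact exists_congr fun _ => eq_comm
  have hdenoms : denoms ≠ ⊥ := by
    obtain ⟨b, r, hr, rfl⟩ := IsFractionRing.div_surjective (A := R) x
    have hr₀ := nonZeroDivisors.ne_zero hr
    refine (Submodule.ne_bot_iff _).mpr ⟨r, (mem_denoms r).mpr ⟨b, ?_⟩, hr₀⟩
    exact div_mul_cancel₀ _ (by simpa using hr₀)
  obtain ⟨n, hn, a, ha₀, ha⟩ := exists_ne_zero_span_eq_pow hR hdenoms
  have had : a ∈ denoms := Ideal.pow_le_self hn (ha ▸ Ideal.mem_span_singleton_self a)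
  obtain ⟨b, hb⟩ := (mem_denoms a).mp had
  refine ⟨a, b, isUnit_algebraMap_integer ha₀ fun v hv hav => ?_, hb⟩
  obtain ⟨c, ⟨r, hr⟩, hrc⟩ := v.exists_primeCompl_mul_eq_of_integer x (hx v hv)
  have hle : denoms ^ n ≤ v.asIdeal := ha ▸ (Ideal.span_singleton_le_iff_mem _).mpr hav
  exact hr (v.isPrime.le_of_pow_le hle ((mem_denoms r).mpr ⟨c, hrc⟩))

variable (S K) in
theorem isLocalization_integer (hR : IsMulTorsion (ClassGroup R)) :
    IsLocalization ((IsUnit.submonoid (S.integer K)).comap (algebraMap R (S.integer K)))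
      (S.integer K) := by
  refine (isLocalization_iff _ _).mpr ⟨fun a => a.2, ?_, fun h => ⟨1, ?_⟩⟩
  · rintro ⟨x, hx⟩
    obtain ⟨a, b, ha, hab⟩ := exists_isUnit_mul_eq_algebraMap hR hx
    exact ⟨⟨b, ⟨a, ha⟩⟩, Subtype.ext hab⟩
  · rw [IsFractionRing.injective R K (congrArg (Subtype.val : S.integer K → K) h)]

theorem isDedekindDomain_integer (hR : IsMulTorsion (ClassGroup R)) :
    IsDedekindDomain (S.integer K) := by
  have := isLocalization_integer K S hR
  refine IsLocalization.isDedekindDomain R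
    (M := (IsUnit.submonoid (S.integer K)).comap (algebraMap R (S.integer K))) ?_ (S.integer K)
  refine le_nonZeroDivisors_of_noZeroDivisors fun h => ?_
  have h₀ : IsUnit (algebraMap R (S.integer K) 0) := h
  exact not_isUnit_zero (map_zero (algebraMap R (S.integer K)) ▸ h₀)

theorem isFractionRing_integer (hR : IsMulTorsion (ClassGroup R)) :
    IsFractionRing (S.integer K) K := by
  have := isLocalization_integer K S hR
  exact IsFractionRing.isFractionRing_of_isDomain_of_isLocalization
    ((IsUnit.submonoid (S.integer K)).comap (algebraMap R (S.integer K))) (S.integer K) K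

end SIntegers

theorem restriction_to_generic_fibre_surjective_general {O K : Type*} [CommRing O]
    [IsDedekindDomain O] [Field K] [Algebra O K] [IsFractionRing O K] {f : O[X]}
    (hmonic : f.Monic) (hdeg : f.natDegree ≠ 0) (h2 : IsUnit (2 : O))
    (hdisc : IsCoprime f (derivative f)) {J : Ideal (HypRingR K (f.map (algebraMap O K)))}
    (hJ : J ≠ ⊥) :
    ∃ I : Ideal (HypRingR O f),
      IsUnit (I : FractionalIdeal (HypRingR O f)⁰ (FractionRing (HypRingR O f))) ∧
      I.map (HypMap O K (algebraMap O K) f) = J := by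
  let := (HypMap O K (algebraMap O K) f).toAlgebra
  have hloc := HypRingR.isLocalization_hypMap (f := f) (S := K) O⁰
  have hsep : f.Separable := hdisc
  have hu : ¬IsUnit f := not_isUnit_of_natDegree_pos f (Nat.pos_of_ne_zero hdeg)
  have : IsDomain (HypRingR O f) :=
    HypRingR.isDomain (not_isSquare_of_squarefree hsep.squarefree hu)
  have : IsDedekindDomain (HypRingR K (f.map (algebraMap O K))) :=
    HypRingR.isDedekindDomain_map hmonic hdeg h2 hsep (algebraMap O K)
  refine ⟨J.under _, isUnit_coeIdeal_under (O := O) (fun p hp hp₀ => ?_) _ hJ,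
    IsLocalization.map_under (Algebra.algebraMapSubmonoid _ O⁰) _ J⟩
  have := hp.isMaximal hp₀
  let := Ideal.Quotient.field p
  have := HypRingR.isDedekindDomain_map hmonic hdeg h2 hsep (Ideal.Quotient.mk p)
  exact isDedekindDomain_of_ringEquiv (HypRingR.quotientMapEquiv f p).symm

/-- **Surjectivity of the restriction to the generic fibre `Pic(A) → Pic(B)`.**
`K` a number field, `S` a finite set of primes such that `2` and the
discriminant of `f` are invertible in `O = O_{K,S}` (the invertibility of
`disc(f)`, for `f` monic, being expressed by the unimodular row condition that
`f` and its derivative generate the unit ideal of `O[X]`), with `f ∈ O_K[X]`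
monic squarefree of odd degree `≥ 3`. Let `A := O[X][Y]/⟨Y² − f⟩` and
`B := K[X][Y]/⟨Y² − f⟩`. Then every nonzero ideal `J` of `B` is, up to nonzero
principal factors, the extension of an ideal `I` of `A` which is invertible as
a fractional ideal of `A`: `⟨g⟩·J = ⟨h⟩·(I·B)` for some nonzero `g, h ∈ B`. -/
theorem restriction_to_generic_fibre_surjective
    (K : Type*) [Field K] [NumberField K]
    (S : Finset (HeightOneSpectrum (𝓞 K)))
    (f : Polynomial (𝓞 K)) (hmonic : f.Monic) (hsqfree : Squarefree f)
    (hodd : Odd f.natDegree) (hdeg : 3 ≤ f.natDegree)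
    (h2 : IsUnit (2 : SInt K S))
    (hdisc : IsCoprime (f.map (algebraMap (𝓞 K) (SInt K S)))
        (derivative (f.map (algebraMap (𝓞 K) (SInt K S)))))
    (J : Ideal (HypRingR K ((f.map (algebraMap (𝓞 K) (SInt K S))).map
        (algebraMap (SInt K S) K))))
    (hJ : J ≠ ⊥) :
    ∃ I : Ideal (HypRingR (SInt K S) (f.map (algebraMap (𝓞 K) (SInt K S)))),
      IsUnit (I : FractionalIdeal
          (HypRingR (SInt K S) (f.map (algebraMap (𝓞 K) (SInt K S))))⁰
          (FractionRing (HypRingR (SInt K S) (f.map (algebraMap (𝓞 K) (SInt K S)))))) ∧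
      ∃ g h : HypRingR K ((f.map (algebraMap (𝓞 K) (SInt K S))).map (algebraMap (SInt K S) K)),
        g ≠ 0 ∧ h ≠ 0 ∧
        Ideal.span {g} * J =
          Ideal.span {h} * (I.map (HypMap (SInt K S) K (algebraMap (SInt K S) K)
            (f.map (algebraMap (𝓞 K) (SInt K S))))) := by
  have hcl := isMulTorsion_of_finite (G := ClassGroup (𝓞 K))
  have := isDedekindDomain_integer (K := K) (S := S) hcl
  have := isFractionRing_integer (K := K) (S := S) hcl
  have hdeg' : (f.map (algebraMap (𝓞 K) (SInt K S))).natDegree ≠ 0 := by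
    rw [hmonic.natDegree_map]
    omega
  obtain ⟨I, hI, rfl⟩ := restriction_to_generic_fibre_surjective_general
    (hmonic.map _) hdeg' h2 hdisc hJ
  obtain ⟨x, -, hx⟩ := Submodule.exists_mem_ne_zero_of_ne_bot hJ
  have := nontrivial_of_ne x 0 hx
  exact ⟨I, hI, 1, 1, one_ne_zero, one_ne_zero, rfl⟩
end
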